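/- arXiv:2408.00422 — 5 statements merged into one kernel-verified Lean document; each statement's English description precedes it below -/
import Mathlib

section
/- Let n ≥ 1 and let A ∈ ℝ^{n×n} be a symmetric matrix with nonnegative entries. For any sequence ε_k → 0⁺, the functionals GL^A_{ε_k} Γ-converge, with respect to convergence of vectors in ℝⁿ, to the graph total-variation functional F₀ defined by F₀(u) = (2/n²) Σ_{i,j=1}^n A_{ij}|u_i − u_j| if u ∈ {−1,1}ⁿ and F₀(u) = +∞ otherwise. -/
open MeasureTheory Filter
open scoped Classical

noncomputable section

/-- The double-well potential `Φ(s) = (s² − 1)²`. -/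
def Phi (s : ℝ) : ℝ := (s ^ 2 - 1) ^ 2

/-- The graph Ginzburg–Landau functional
`GL^A_ε(u) = (1/n²) Σ_{i,j} A_{ij}(u_i−u_j)² + (1/(εn)) Σ_i Φ(u_i)`. -/
def glGraph (n : ℕ) (A : Fin n → Fin n → ℝ) (ε : ℝ) (u : Fin n → ℝ) : ℝ :=
  (1 / (n : ℝ) ^ 2) * ∑ i : Fin n, ∑ j : Fin n, A i j * (u i - u j) ^ 2
    + (1 / (ε * n)) * ∑ i : Fin n, Phi (u i)

/-- The graph total-variation functional: `(2/n²) Σ_{i,j} A_{ij}|u_i − u_j|` on `{−1,1}ⁿ`,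
and `+∞` otherwise. -/
def graphTV (n : ℕ) (A : Fin n → Fin n → ℝ) (u : Fin n → ℝ) : EReal :=
  if ∀ i, u i = 1 ∨ u i = -1 then
    (((2 / (n : ℝ) ^ 2) * ∑ i : Fin n, ∑ j : Fin n, A i j * |u i - u j| : ℝ) : EReal)
  else ⊤

/-- Γ-convergence of functionals with values in `ℝ ∪ {±∞}` with respect to a notion of
sequential convergence `conv`. -/
def GammaConv {X : Type*} (conv : (ℕ → X) → X → Prop)
    (F : ℕ → X → EReal) (Flim : X → EReal) : Prop :=
  (∀ (xs : ℕ → X) (x : X), conv xs x →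
      Flim x ≤ Filter.liminf (fun n => F n (xs n)) Filter.atTop) ∧
  (∀ x : X, ∃ xs : ℕ → X, conv xs x ∧
      Filter.limsup (fun n => F n (xs n)) Filter.atTop ≤ Flim x)

/-- The graph Ginzburg–Landau functionals Γ-converge, as `ε → 0⁺`, to the graph
total-variation functional, with respect to convergence of vectors in `ℝⁿ`. -/
theorem graphGL_gammaConv_graphTV
    (n : ℕ) (hn : 1 ≤ n) (A : Fin n → Fin n → ℝ)
    (hsymm : ∀ i j, A i j = A j i) (hA : ∀ i j, 0 ≤ A i j)
    (ε : ℕ → ℝ) (hεpos : ∀ k, 0 < ε k) (hε : Tendsto ε atTop (nhds 0)) :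
    GammaConv (fun us u => Tendsto us atTop (nhds u))
      (fun k u => ((glGraph n A (ε k) u : ℝ) : EReal))
      (graphTV n A) := by
  have hn0 : (0 : ℝ) < n := by exact_mod_cast hn
  have hPhi : ∀ s, 0 ≤ Phi s := fun s => sq_nonneg _
  have key : ∀ x : Fin n → ℝ, (∀ i, x i = 1 ∨ x i = -1) →
      (1 / (n : ℝ) ^ 2) * ∑ i : Fin n, ∑ j : Fin n, A i j * (x i - x j) ^ 2
        = (2 / (n : ℝ) ^ 2) * ∑ i : Fin n, ∑ j : Fin n, A i j * |x i - x j| := by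
    intro x hx
    have h : ∑ i : Fin n, ∑ j : Fin n, A i j * (x i - x j) ^ 2
        = 2 * ∑ i : Fin n, ∑ j : Fin n, A i j * |x i - x j| := by
      rw [Finset.mul_sum]
      refine Finset.sum_congr rfl fun i _ => ?_
      rw [Finset.mul_sum]
      refine Finset.sum_congr rfl fun j _ => ?_
      have h2 : (x i - x j) ^ 2 = 2 * |x i - x j| := by
        rcases hx i with h | h <;> rcases hx j with h' | h' <;> rw [h, h'] <;> norm_num
      rw [h2]; ring
    rw [h]; ring
  refine ⟨?_, ?_⟩
  · intro xs x hx
    have hxi : ∀ i, Tendsto (fun k => xs k i) atTop (nhds (x i)) := tendsto_pi_nhds.1 hx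
    by_cases hb : ∀ i, x i = 1 ∨ x i = -1
    · rw [graphTV, if_pos hb, ← key x hb]
      have ht : Tendsto (fun k => (1 / (n : ℝ) ^ 2) *
          ∑ i : Fin n, ∑ j : Fin n, A i j * (xs k i - xs k j) ^ 2) atTop
          (nhds ((1 / (n : ℝ) ^ 2) * ∑ i : Fin n, ∑ j : Fin n, A i j * (x i - x j) ^ 2)) := by
        refine Tendsto.const_mul _ (tendsto_finsetSum _ fun i _ => tendsto_finsetSum _ fun j _ => ?_)
        exact (((hxi i).sub (hxi j)).pow 2).const_mul _
      have ht' := (EReal.tendsto_coe.2 ht)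
      rw [← ht'.liminf_eq]
      refine liminf_le_liminf (Eventually.of_forall fun k => ?_)
      rw [EReal.coe_le_coe_iff]
      unfold glGraph
      have h1 : 0 ≤ (1 / (ε k * n)) * ∑ i : Fin n, Phi (xs k i) :=
        mul_nonneg (by have := hεpos k; positivity) (Finset.sum_nonneg fun i _ => hPhi _)
      linarith
    · rw [graphTV, if_neg hb]
      have hb' := hb
      push Not at hb
      obtain ⟨i, h1, h2⟩ := hb
      have hpos : 0 < Phi (x i) := by
        unfold Phi
        have : x i ^ 2 - 1 ≠ 0 := by
          have e : x i ^ 2 - 1 = (x i - 1) * (x i + 1) := by ring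
          rw [e]
          exact mul_ne_zero (sub_ne_zero.2 h1) (fun h => h2 (by linarith))
        positivity
      have hP : Tendsto (fun k => Phi (xs k i)) atTop (nhds (Phi (x i))) :=
        (((hxi i).pow 2).sub_const 1).pow 2
      have hE : Tendsto (fun k => (1 / (ε k * n))) atTop atTop := by
        have h0 : Tendsto (fun k => ε k * n) atTop (nhdsWithin 0 (Set.Ioi 0)) := by
          refine tendsto_nhdsWithin_iff.2 ⟨by simpa using hε.mul_const (n : ℝ), ?_⟩
          exact Eventually.of_forall fun k => mul_pos (hεpos k) hn0
        simpa [one_div, Function.comp_def] using tendsto_inv_nhdsGT_zero.comp h0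
      have hT := hE.atTop_mul_pos hpos hP
      have hG : Tendsto (fun k => glGraph n A (ε k) (xs k)) atTop atTop := by
        refine tendsto_atTop_mono (fun k => ?_) hT
        unfold glGraph
        have a1 : 0 ≤ (1 / (n : ℝ) ^ 2) *
            ∑ i : Fin n, ∑ j : Fin n, A i j * (xs k i - xs k j) ^ 2 :=
          mul_nonneg (by positivity) (Finset.sum_nonneg fun i _ => Finset.sum_nonneg fun j _ =>
            mul_nonneg (hA i j) (sq_nonneg _))
        have a2 : Phi (xs k i) ≤ ∑ i : Fin n, Phi (xs k i) :=
          Finset.single_le_sum (f := fun i => Phi (xs k i)) (fun i _ => hPhi _) (Finset.mem_univ i)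
        have a3 : 0 ≤ 1 / (ε k * n) := by have := hεpos k; positivity
        have a4 := mul_le_mul_of_nonneg_left a2 a3
        linarith
      have hG' := EReal.tendsto_coe_nhds_top_iff.2 hG
      exact hG'.liminf_eq.ge
  · intro x
    refine ⟨fun _ => x, tendsto_const_nhds, ?_⟩
    by_cases hb : ∀ i, x i = 1 ∨ x i = -1
    · have hz : ∑ i : Fin n, Phi (x i) = 0 := Finset.sum_eq_zero fun i _ => by
        rcases hb i with h | h <;> rw [h] <;> norm_num [Phi]
      rw [graphTV, if_pos hb, ← key x hb]
      simp only [glGraph, hz, mul_zero, add_zero]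
      exact (tendsto_const_nhds.limsup_eq).le
    · rw [graphTV, if_neg hb]
      exact le_top
end
end

section
/- Let n ≥ 1, let A ∈ ℝ^{n×n} be a symmetric matrix with nonnegative entries, let ε_k → 0⁺, and let C > 0. If u_k ∈ ℝⁿ is a sequence with GL^A_{ε_k}(u_k) ≤ C for all k, then there exist a subsequence (u_{k_j}) and a vector u_∞ ∈ {−1,1}ⁿ such that u_{k_j} → u_∞ in ℝⁿ. -/
open MeasureTheory Filter

noncomputable section

/-- Compactness: a sequence with uniformly bounded Ginzburg–Landau energies (along `ε_k → 0⁺`)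
has a subsequence converging to a vector with values in `{−1,1}`. -/
theorem graphGL_compactness
    (n : ℕ) (hn : 1 ≤ n) (A : Fin n → Fin n → ℝ)
    (hsymm : ∀ i j, A i j = A j i) (hA : ∀ i j, 0 ≤ A i j)
    (ε : ℕ → ℝ) (hεpos : ∀ k, 0 < ε k) (hε : Tendsto ε atTop (nhds 0))
    (C : ℝ) (hC : 0 < C) (u : ℕ → Fin n → ℝ)
    (hu : ∀ k, glGraph n A (ε k) (u k) ≤ C) :
    ∃ φ : ℕ → ℕ, StrictMono φ ∧ ∃ v : Fin n → ℝ, (∀ i, v i = 1 ∨ v i = -1) ∧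
      Tendsto (fun j => u (φ j)) atTop (nhds v) := by
  have hn0 : (0 : ℝ) < n := by exact_mod_cast hn
  have hΦ0 : ∀ s, 0 ≤ Phi s := fun s => sq_nonneg _
  have hb : ∀ k i, Phi (u k i) ≤ C * (ε k * n) := by
    intro k i
    have hk := hu k
    unfold glGraph at hk
    have h1 : 0 ≤ (1 / (n : ℝ) ^ 2) *
        ∑ i : Fin n, ∑ j : Fin n, A i j * (u k i - u k j) ^ 2 :=
      mul_nonneg (by positivity) (Finset.sum_nonneg fun i _ => Finset.sum_nonneg fun j _ =>
        mul_nonneg (hA i j) (sq_nonneg _))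
    have h2 : Phi (u k i) ≤ ∑ i : Fin n, Phi (u k i) :=
      Finset.single_le_sum (f := fun i => Phi (u k i)) (fun i _ => hΦ0 _) (Finset.mem_univ i)
    have hp : 0 < ε k * n := mul_pos (hεpos k) hn0
    have h3 : (1 / (ε k * n)) * ∑ i : Fin n, Phi (u k i) ≤ C := by linarith
    rw [one_div, inv_mul_eq_div, div_le_iff₀ hp] at h3
    linarith
  obtain ⟨M, hM⟩ := hε.bddAbove_range
  have hM' : ∀ k, ε k ≤ M := fun k => hM ⟨k, rfl⟩
  have hM0 : 0 < M := (hεpos 0).trans_le (hM' 0)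
  have hK0 : 0 < C * (M * n) := by positivity
  have hmem : ∀ k, u k ∈ Metric.closedBall (0 : Fin n → ℝ) (C * (M * n) + 2) := by
    intro k
    rw [mem_closedBall_zero_iff, pi_norm_le_iff_of_nonneg (by positivity)]
    intro i
    have h1 : Phi (u k i) ≤ C * (M * n) := (hb k i).trans (by gcongr; exact hM' k)
    unfold Phi at h1
    rw [Real.norm_eq_abs]
    apply abs_le_of_sq_le_sq _ (by positivity)
    nlinarith [sq_nonneg ((u k i) ^ 2 - 1 - 1)]
  obtain ⟨v, -, φ, hφ, hv⟩ := tendsto_subseq_of_bounded Metric.isBounded_closedBall hmem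
  refine ⟨φ, hφ, v, fun i => ?_, hv⟩
  have hvi : Tendsto (fun j => u (φ j) i) atTop (nhds (v i)) := (tendsto_pi_nhds.1 hv) i
  have hl : Tendsto (fun j => Phi (u (φ j) i)) atTop (nhds (Phi (v i))) := by
    unfold Phi
    exact ((hvi.pow 2).sub_const 1).pow 2
  have hr : Tendsto (fun j => C * (ε (φ j) * n)) atTop (nhds (C * (0 * n))) :=
    ((hε.comp hφ.tendsto_atTop).mul_const _).const_mul _
  have hle : Phi (v i) ≤ C * (0 * n) := le_of_tendsto_of_tendsto' hl hr fun j => hb _ i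
  have h0 : Phi (v i) = 0 := le_antisymm (by simpa using hle) (hΦ0 _)
  unfold Phi at h0
  have h1 : v i ^ 2 = 1 := (sub_eq_zero.1 (pow_eq_zero_iff two_ne_zero |>.1 h0))
  simpa using h1
end
end

section
/- Let W_n be the step graphons of symmetric n×n matrices with entries in [0,1], let W : (0,1)² → [0,1] be symmetric and measurable, and assume ‖W_n − W‖_□ → 0. Then the graphon total-variation functionals TV^{W_n} Γ-converge to TV^W on the set of Young measures on (0,1), with respect to narrow convergence of Young measures. -/
open MeasureTheory Filter
open scoped Classical

noncomputable section

/-- The open unit interval `(0,1)` as a subset of `ℝ`. -/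
def I01 : Set ℝ := Set.Ioo 0 1

/-- A Young measure on `(0,1)`: a measurable family of Borel probability measures on `ℝ`
(a Markov kernel from `(0,1)` to `ℝ`). -/
def IsYoungMeasure (ν : ℝ → Measure ℝ) : Prop :=
  Measurable ν ∧ ∀ x, IsProbabilityMeasure (ν x)

/-- The type of Young measures on `(0,1)`. -/
def YM := {ν : ℝ → Measure ℝ // IsYoungMeasure ν}

/-- Narrow convergence of Young measures: for every bounded continuous `f : ℝ → ℝ` and every
`g ∈ L¹((0,1))`, `∫₀¹ g(x)(∫ f dν^n_x) dx → ∫₀¹ g(x)(∫ f dν_x) dx`. -/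
def NarrowConv (ν : ℕ → ℝ → Measure ℝ) (μ : ℝ → Measure ℝ) : Prop :=
  ∀ f : ℝ → ℝ, Continuous f → (∃ C, ∀ s, |f s| ≤ C) →
    ∀ g : ℝ → ℝ, IntegrableOn g I01 →
      Tendsto (fun n => ∫ x in I01, g x * ∫ t, f t ∂(ν n x)) atTop
        (nhds (∫ x in I01, g x * ∫ t, f t ∂(μ x)))

/-- The cut norm of a kernel `V ∈ L¹((0,1)²)`. -/
def cutNorm (V : ℝ → ℝ → ℝ) : ℝ :=
  sSup {r : ℝ | ∃ f g : ℝ → ℝ, Measurable f ∧ Measurable g ∧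
    (∀ x, f x ∈ Set.Icc (-1 : ℝ) 1) ∧ (∀ x, g x ∈ Set.Icc (-1 : ℝ) 1) ∧
    r = |∫ x in I01, ∫ y in I01, V x y * f x * g y|}

/-- The index `i` with `x ∈ ((i−1)/n, i/n]`, shifted to start at `0`. -/
def stepIdx (n : ℕ) (x : ℝ) : ℕ := ⌈(n : ℝ) * x⌉₊ - 1

/-- The step graphon of an `n × n` matrix `A`: equal to `A i j` on `I_i × I_j`, where
`I_i = ((i−1)/n, i/n]`. -/
def stepGraphon (n : ℕ) (A : Fin n → Fin n → ℝ) (x y : ℝ) : ℝ :=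
  if hx : stepIdx n x < n then
    if hy : stepIdx n y < n then A ⟨stepIdx n x, hx⟩ ⟨stepIdx n y, hy⟩ else 0
  else 0

/-- The graphon total-variation functional
`TV^V(ν) = 2∫₀¹∫₀¹ V(x,y) ∫∫ |λ−μ| dν_x(λ) dν_y(μ) dx dy` if `ν_x({−1,1}) = 1` a.e.,
and `+∞` otherwise. -/
def graphonTV (V : ℝ → ℝ → ℝ) (ν : ℝ → Measure ℝ) : EReal :=
  if ∀ᵐ x ∂(volume.restrict I01), ν x ({-1, 1} : Set ℝ) = 1 then
    ((2 * ∫ x in I01, ∫ y in I01,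
        V x y * ∫ t, (∫ s, |s - t| ∂(ν x)) ∂(ν y) : ℝ) : EReal)
  else ⊤

/-- Lebesgue measure on the unit interval. -/
def mu01 : Measure ℝ := volume.restrict I01

instance mu01_prob : IsProbabilityMeasure mu01 := by
  constructor
  simp [mu01, I01]

/-- Truncation to `[-1,1]`. -/
def clip (t : ℝ) : ℝ := max (-1) (min 1 t)

/-- Detects the distance to `{-1,1}`. -/
def well (t : ℝ) : ℝ := min 1 |(|t| - 1)|

theorem clip_cont : Continuous clip := by unfold clip; fun_prop

theorem well_cont : Continuous well := by unfold well; fun_prop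

theorem clip_bound (t : ℝ) : |clip t| ≤ 1 := by
  unfold clip
  rw [abs_le]
  exact ⟨le_max_left _ _, max_le (by norm_num) (min_le_left _ _)⟩

theorem well_nonneg (t : ℝ) : 0 ≤ well t := le_min zero_le_one (abs_nonneg _)

theorem well_bound (t : ℝ) : |well t| ≤ 1 := by
  rw [abs_of_nonneg (well_nonneg t)]
  exact min_le_left _ _

theorem well_eq_zero (t : ℝ) : well t = 0 ↔ t ∈ ({-1, 1} : Set ℝ) := by
  unfold well
  simp only [Set.mem_insert_iff, Set.mem_singleton_iff]
  constructor
  · intro h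
    have h2 : |(|t| - 1)| = 0 := by
      rcases min_choice (1 : ℝ) |(|t| - 1)| with h1 | h1 <;> rw [h1] at h
      · norm_num at h
      · exact h
    rw [abs_eq_zero, sub_eq_zero, abs_eq zero_le_one] at h2
    tauto
  · rintro (h | h) <;> simp [h]

/-- Mean of the truncation. -/
def ymMean (ν : ℝ → Measure ℝ) (x : ℝ) : ℝ := ∫ t, clip t ∂(ν x)

theorem ym_meas {ν : ℝ → Measure ℝ} (hν : IsYoungMeasure ν) {f : ℝ → ℝ} (hf : Continuous f) :
    Measurable (fun x => ∫ t, f t ∂(ν x)) := by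
  let κ : ProbabilityTheory.Kernel ℝ ℝ := ⟨ν, hν.1⟩
  have : StronglyMeasurable (fun x => ∫ t, f t ∂(κ x)) :=
    hf.stronglyMeasurable.integral_kernel
  exact this.measurable

theorem bdd_int {α : Type*} [MeasurableSpace α] {μ : Measure α} [IsFiniteMeasure μ] {f : α → ℝ}
    (hf : Measurable f) (C : ℝ) (hC : ∀ x, |f x| ≤ C) : Integrable f μ :=
  Integrable.of_bound hf.aestronglyMeasurable C (Eventually.of_forall hC)

theorem ym_bound {ν : ℝ → Measure ℝ} (hν : IsYoungMeasure ν) {f : ℝ → ℝ}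
    (hb : ∀ t, |f t| ≤ 1) (x : ℝ) : |∫ t, f t ∂(ν x)| ≤ 1 := by
  have := hν.2 x
  have := norm_integral_le_of_norm_le_const (μ := ν x) (f := f) (C := 1)
    (Eventually.of_forall hb)
  simpa using this

theorem supp_ae {ν : Measure ℝ} [IsProbabilityMeasure ν] :
    ν ({-1, 1} : Set ℝ) = 1 ↔ ∀ᵐ t ∂ν, t ∈ ({-1, 1} : Set ℝ) := by
  have hm : MeasurableSet ({-1, 1} : Set ℝ) := by measurability
  exact (mem_ae_iff_prob_eq_one hm).symm

theorem supp_iff {ν : Measure ℝ} [IsProbabilityMeasure ν] :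
    ν ({-1, 1} : Set ℝ) = 1 ↔ ∫ t, well t ∂ν = 0 := by
  rw [supp_ae, integral_eq_zero_iff_of_nonneg well_nonneg
    (bdd_int well_cont.measurable 1 well_bound)]
  apply Filter.eventually_congr
  exact Eventually.of_forall fun t => (well_eq_zero t).symm

theorem supp_all {ν : ℝ → Measure ℝ} (hν : IsYoungMeasure ν) :
    (∀ᵐ x ∂mu01, ν x ({-1, 1} : Set ℝ) = 1) ↔ ∫ x, (∫ t, well t ∂(ν x)) ∂mu01 = 0 := by
  rw [integral_eq_zero_iff_of_nonneg
    (fun x => integral_nonneg well_nonneg)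
    (bdd_int (ym_meas hν well_cont) 1 (ym_bound hν well_bound))]
  apply Filter.eventually_congr
  refine Eventually.of_forall fun x => ?_
  have := hν.2 x
  exact supp_iff

theorem pair_val {ν ρ : Measure ℝ} [IsProbabilityMeasure ν] [IsProbabilityMeasure ρ]
    (h1 : ν ({-1, 1} : Set ℝ) = 1) (h2 : ρ ({-1, 1} : Set ℝ) = 1) :
    ∫ t, (∫ s, |s - t| ∂ν) ∂ρ = 1 - (∫ t, clip t ∂ν) * ∫ t, clip t ∂ρ := by
  rw [supp_ae] at h1 h2
  have hi : ∀ (κ : Measure ℝ) [IsProbabilityMeasure κ], Integrable clip κ :=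
    fun κ _ => bdd_int clip_cont.measurable 1 clip_bound
  have : ∀ᵐ t ∂ρ, (∫ s, |s - t| ∂ν) = 1 - (∫ t, clip t ∂ν) * clip t := by
    filter_upwards [h2] with t ht
    have : ∀ᵐ s ∂ν, |s - t| = 1 - clip s * clip t := by
      filter_upwards [h1] with s hs
      simp only [Set.mem_insert_iff, Set.mem_singleton_iff] at hs ht
      rcases hs with rfl | rfl <;> rcases ht with rfl | rfl <;> norm_num [clip]
    rw [integral_congr_ae this, integral_sub (integrable_const _) ((hi ν).mul_const _),
      integral_mul_const]
    simp
  rw [integral_congr_ae this, integral_sub (integrable_const _) ((hi ρ).const_mul _),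
      integral_const_mul]
  simp

/-- The bilinear form of a kernel. -/
def bil (V : ℝ → ℝ → ℝ) (f g : ℝ → ℝ) : ℝ := ∫ x, ∫ y, V x y * f x * g y ∂mu01 ∂mu01

/-- Admissible kernels. -/
def Adm (V : ℝ → ℝ → ℝ) : Prop := Measurable (Function.uncurry V) ∧ ∀ x y, |V x y| ≤ 1

/-- Admissible test functions. -/
def Tst (f : ℝ → ℝ) : Prop := Measurable f ∧ ∀ x, |f x| ≤ 1

theorem mul3_bound {a b c : ℝ} (ha : |a| ≤ 1) (hb : |b| ≤ 1) (hc : |c| ≤ 1) :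
    |a * b * c| ≤ 1 := by
  rw [abs_mul, abs_mul]
  exact mul_le_one₀ (mul_le_one₀ ha (abs_nonneg _) hb) (abs_nonneg _) hc

theorem tri_int {V : ℝ → ℝ → ℝ} (hV : Adm V) {f g : ℝ → ℝ} (hf : Tst f) (hg : Tst g) :
    Integrable (fun p : ℝ × ℝ => V p.1 p.2 * f p.1 * g p.2) (mu01.prod mu01) := by
  refine bdd_int ?_ 1 fun p => mul3_bound (hV.2 _ _) (hf.2 _) (hg.2 _)
  exact (Measurable.mul hV.1 (hf.1.comp measurable_fst)).mul (hg.1.comp measurable_snd)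

theorem bil_prod {V : ℝ → ℝ → ℝ} (hV : Adm V) {f g : ℝ → ℝ} (hf : Tst f) (hg : Tst g) :
    bil V f g = ∫ p : ℝ × ℝ, V p.1 p.2 * f p.1 * g p.2 ∂(mu01.prod mu01) := by
  rw [integral_prod _ (tri_int hV hf hg)]
  rfl

theorem tst_one : Tst (fun _ => 1) := ⟨measurable_const, by simp⟩

theorem tst_mean {ν : ℝ → Measure ℝ} (hν : IsYoungMeasure ν) : Tst (ymMean ν) :=
  ⟨ym_meas hν clip_cont, ym_bound hν clip_bound⟩

/-- The real-valued energy. -/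
def energy (V : ℝ → ℝ → ℝ) (m : ℝ → ℝ) : ℝ := 2 * (bil V (fun _ => 1) (fun _ => 1) - bil V m m)

theorem tv_eq {V : ℝ → ℝ → ℝ} (hV : Adm V) {ν : ℝ → Measure ℝ} (hν : IsYoungMeasure ν)
    (hs : ∀ᵐ x ∂mu01, ν x ({-1, 1} : Set ℝ) = 1) :
    graphonTV V ν = (energy V (ymMean ν) : EReal) := by
  unfold graphonTV
  refine (if_pos hs).trans ?_
  unfold energy
  congr 2
  have hm := tst_mean hν
  rw [bil_prod hV tst_one tst_one, bil_prod hV hm hm,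
    ← integral_sub (tri_int hV tst_one tst_one) (tri_int hV hm hm)]
  refine Eq.trans ?_
    (integral_prod _ ((tri_int hV tst_one tst_one).sub (tri_int hV hm hm))).symm
  apply integral_congr_ae
  filter_upwards [hs] with x hx
  apply integral_congr_ae
  filter_upwards [hs] with y hy
  have := hν.2 x
  have := hν.2 y
  simp only [Pi.sub_apply]
  rw [pair_val hx hy]
  unfold ymMean
  ring

theorem tv_ge {V : ℝ → ℝ → ℝ} (hV : Adm V) {ν : ℝ → Measure ℝ} (hν : IsYoungMeasure ν) :
    (energy V (ymMean ν) : EReal) ≤ graphonTV V ν := by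
  by_cases hs : ∀ᵐ x ∂mu01, ν x ({-1, 1} : Set ℝ) = 1
  · rw [tv_eq hV hν hs]
  · unfold graphonTV
    exact le_top.trans_eq (if_neg hs).symm

theorem step_adm {n : ℕ} {A : Fin n → Fin n → ℝ} (hA : ∀ i j, A i j ∈ Set.Icc (0 : ℝ) 1) :
    Measurable (Function.uncurry (stepGraphon n A)) ∧
      ∀ x y, stepGraphon n A x y ∈ Set.Icc (0 : ℝ) 1 := by
  constructor
  · let F : ℕ × ℕ → ℝ := fun p => if hx : p.1 < n then
      if hy : p.2 < n then A ⟨p.1, hx⟩ ⟨p.2, hy⟩ else 0 else 0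
    have hI : Measurable (stepIdx n) := by
      have h1 : Measurable (fun x : ℝ => ⌈(n : ℝ) * x⌉₊) :=
        Nat.measurable_ceil.comp (measurable_const.mul measurable_id)
      exact (measurable_from_top (f := fun k : ℕ => k - 1)).comp h1
    have hF : Measurable F := measurable_of_countable F
    exact hF.comp ((hI.comp measurable_fst).prodMk (hI.comp measurable_snd))
  · intro x y
    unfold stepGraphon
    split_ifs
    · exact hA _ _
    · simp
    · simp

theorem bil_bound {V : ℝ → ℝ → ℝ} (hV : Adm V) {f g : ℝ → ℝ} (hf : Tst f) (hg : Tst g) :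
    |bil V f g| ≤ 1 := by
  rw [bil_prod hV hf hg]
  have := norm_integral_le_of_norm_le_const (μ := mu01.prod mu01)
    (f := fun p : ℝ × ℝ => V p.1 p.2 * f p.1 * g p.2) (C := 1)
    (Eventually.of_forall fun p => mul3_bound (hV.2 _ _) (hf.2 _) (hg.2 _))
  simpa using this

theorem bil_cut {V : ℝ → ℝ → ℝ} (hV : Adm V) {f g : ℝ → ℝ} (hf : Tst f) (hg : Tst g) :
    |bil V f g| ≤ cutNorm V := by
  apply le_csSup
  · refine ⟨1, ?_⟩
    rintro r ⟨f, g, hf, hg, hf1, hg1, rfl⟩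
    exact bil_bound hV ⟨hf, fun x => abs_le.2 (hf1 x)⟩ ⟨hg, fun x => abs_le.2 (hg1 x)⟩
  · exact ⟨f, g, hf.1, hg.1, fun x => abs_le.1 (hf.2 x), fun x => abs_le.1 (hg.2 x), rfl⟩

theorem bil_sub {V W : ℝ → ℝ → ℝ} (hV : Adm V) (hW : Adm W)
    (hVW : Adm (fun x y => V x y - W x y)) {f g : ℝ → ℝ} (hf : Tst f)
    (hg : Tst g) : bil (fun x y => V x y - W x y) f g = bil V f g - bil W f g := by
  rw [bil_prod hV hf hg, bil_prod hW hf hg, bil_prod hVW hf hg,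
    ← integral_sub (tri_int hV hf hg) (tri_int hW hf hg)]
  congr 1
  ext p
  ring

theorem bil_weak {W : ℝ → ℝ → ℝ} (hW : Adm W) {m : ℕ → ℝ → ℝ} {l : ℝ → ℝ}
    (hm : ∀ n, Tst (m n)) (hl : Tst l)
    (hw : ∀ g : ℝ → ℝ, Integrable g mu01 →
      Tendsto (fun n => ∫ x, g x * m n x ∂mu01) atTop (nhds (∫ x, g x * l x ∂mu01))) :
    Tendsto (fun n => bil W (m n) (m n)) atTop (nhds (bil W l l)) := by
  let T : (ℝ → ℝ) → ℝ → ℝ := fun f x => ∫ y, W x y * f y ∂mu01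
  have hWx : ∀ x, Integrable (W x) mu01 := fun x =>
    bdd_int (hW.1.comp measurable_prodMk_left) 1 (hW.2 x)
  have hT : ∀ f, Tst f → Tst (T f) := by
    intro f hf
    constructor
    · have : StronglyMeasurable (Function.uncurry fun x y => W x y * f y) :=
        (Measurable.mul hW.1 (hf.1.comp measurable_snd)).stronglyMeasurable
      exact (this.integral_prod_right (ν := mu01)).measurable
    · intro x
      have := norm_integral_le_of_norm_le_const (μ := mu01)
        (f := fun y => W x y * f y) (C := 1)
        (Eventually.of_forall fun y => by
          rw [Real.norm_eq_abs, abs_mul]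
          exact mul_le_one₀ (hW.2 _ _) (abs_nonneg _) (hf.2 _))
      simpa using this
  have hb : ∀ f, bil W f f = ∫ x, T f x * f x ∂mu01 := by
    intro f
    unfold bil
    congr 1
    ext x
    simp only [T]
    rw [← integral_mul_const]
    congr 1
    ext y
    ring
  have hTi : ∀ f, Tst f → Integrable (T f) mu01 := fun f hf =>
    bdd_int (hT f hf).1 1 (hT f hf).2
  have hprod : ∀ f g, Tst f → Tst g → Integrable (fun x => f x * g x) mu01 := by
    intro f g hf hg
    refine bdd_int (hf.1.mul hg.1) 1 fun x => ?_
    rw [abs_mul]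
    exact mul_le_one₀ (hf.2 _) (abs_nonneg _) (hg.2 _)
  have h1 := hw (T l) (hTi l hl)
  have h2 : Tendsto (fun n => ∫ x, (T (m n) x - T l x) * m n x ∂mu01) atTop (nhds 0) := by
    have := tendsto_integral_of_dominated_convergence (μ := mu01)
      (F := fun n x => (T (m n) x - T l x) * m n x) (f := fun _ => 0) (fun _ => 2)
      (fun n => (((hT _ (hm n)).1.sub (hT _ hl).1).mul (hm n).1).aestronglyMeasurable)
      (integrable_const _)
      (fun n => Eventually.of_forall fun x => by
        rw [Real.norm_eq_abs, abs_mul]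
        have a1 := abs_sub (T (m n) x) (T l x)
        have a2 := (hT _ (hm n)).2 x
        have a3 := (hT _ hl).2 x
        have a4 := (hm n).2 x
        have a5 := abs_nonneg (T (m n) x - T l x)
        have a6 := abs_nonneg (m n x)
        nlinarith)
      (Eventually.of_forall fun x => by
        have h3 : Tendsto (fun n => T (m n) x - T l x) atTop (nhds 0) := by
          have := (hw (W x) (hWx x)).sub_const (T l x)
          simpa [T] using this
        refine squeeze_zero_norm (fun n => ?_) (tendsto_zero_iff_norm_tendsto_zero.1 h3)
        rw [norm_mul]
        exact mul_le_of_le_one_right (norm_nonneg _) ((hm n).2 x))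
    simpa using this
  have h4 := h2.add h1
  rw [zero_add, ← hb] at h4
  refine h4.congr fun n => ?_
  rw [hb, ← integral_add]
  · congr 1
    ext x
    ring
  · have := (hprod _ _ (hT _ (hm n)) (hm n)).sub (hprod _ _ (hT _ hl) (hm n))
    refine this.congr (Eventually.of_forall fun x => ?_)
    simp only [Pi.sub_apply]
    ring
  · exact hprod _ _ (hT _ hl) (hm n)

theorem energy_tendsto {Wseq : ℕ → ℝ → ℝ → ℝ} {W : ℝ → ℝ → ℝ} (hWs : ∀ n, Adm (Wseq n))
    (hW : Adm W) (hD : ∀ n, Adm (fun x y => Wseq n x y - W x y))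
    (hcut : Tendsto (fun n => cutNorm (fun x y => Wseq n x y - W x y)) atTop (nhds 0))
    {νs : ℕ → ℝ → Measure ℝ} {ν : ℝ → Measure ℝ} (hνs : ∀ n, IsYoungMeasure (νs n))
    (hν : IsYoungMeasure ν) (hc : NarrowConv νs ν) :
    Tendsto (fun n => energy (Wseq n) (ymMean (νs n))) atTop (nhds (energy W (ymMean ν))) := by
  have hweak := bil_weak hW (fun n => tst_mean (hνs n)) (tst_mean hν)
    (fun g hg => hc clip clip_cont ⟨1, clip_bound⟩ g hg)
  have key : ∀ f : ℕ → ℝ → ℝ, (∀ n, Tst (f n)) →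
      Tendsto (fun n => bil (Wseq n) (f n) (f n) - bil W (f n) (f n)) atTop (nhds 0) := by
    intro f hf
    refine squeeze_zero_norm (fun n => ?_) hcut
    rw [← bil_sub (hWs n) hW (hD n) (hf n) (hf n)]
    exact bil_cut (hD n) (hf n) (hf n)
  have k1 := key (fun _ _ => 1) (fun _ => tst_one)
  have k2 := (key _ (fun n => tst_mean (hνs n))).add hweak
  have k3 := (((k1.add_const (bil W (fun _ => 1) (fun _ => 1))).sub k2).const_mul 2)
  simp only [zero_add, sub_add_cancel] at k3
  exact k3

/-- If step graphons `W_n` of symmetric `[0,1]`-valued matrices converge in cut norm to a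
symmetric measurable `W : (0,1)² → [0,1]`, then `TV^{W_n}` Γ-converges to `TV^W` on the set of
Young measures with respect to narrow convergence. -/
theorem graphTV_gammaConv_graphonTV
    (Wseq : ℕ → ℝ → ℝ → ℝ)
    (hstep : ∀ n, ∃ A : Fin n → Fin n → ℝ, (∀ i j, A i j = A j i) ∧
      (∀ i j, A i j ∈ Set.Icc (0 : ℝ) 1) ∧ Wseq n = stepGraphon n A)
    (W : ℝ → ℝ → ℝ) (hWmeas : Measurable (Function.uncurry W))
    (hWsymm : ∀ x y, W x y = W y x) (hWrange : ∀ x y, W x y ∈ Set.Icc (0 : ℝ) 1)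
    (hcut : Tendsto (fun n => cutNorm (fun x y => Wseq n x y - W x y)) atTop (nhds 0)) :
    GammaConv (fun (νs : ℕ → YM) (ν : YM) => NarrowConv (fun n => (νs n).1) ν.1)
      (fun n ν => graphonTV (Wseq n) ν.1)
      (fun ν => graphonTV W ν.1) := by
  have hst : ∀ n, Measurable (Function.uncurry (Wseq n)) ∧
      ∀ x y, Wseq n x y ∈ Set.Icc (0 : ℝ) 1 := by
    intro n
    obtain ⟨A, -, hA, h⟩ := hstep n
    rw [h]
    exact step_adm hA
  have hWs : ∀ n, Adm (Wseq n) := fun n => ⟨(hst n).1, fun x y =>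
    abs_le.2 ⟨by linarith [((hst n).2 x y).1], ((hst n).2 x y).2⟩⟩
  have hW : Adm W := ⟨hWmeas, fun x y =>
    abs_le.2 ⟨by linarith [(hWrange x y).1], (hWrange x y).2⟩⟩
  have hD : ∀ n, Adm (fun x y => Wseq n x y - W x y) := fun n =>
    ⟨(hst n).1.sub hWmeas, fun x y => by
      have h1 := (hst n).2 x y
      have h2 := hWrange x y
      exact abs_le.2 ⟨by linarith [h1.1, h2.2], by linarith [h1.2, h2.1]⟩⟩
  constructor
  · intro νs ν hc
    by_cases hs : ∀ᵐ x ∂mu01, ν.1 x ({-1, 1} : Set ℝ) = 1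
    · have ht := energy_tendsto hWs hW hD hcut (fun n => (νs n).2) ν.2 hc
      have ht' := (continuous_coe_real_ereal.tendsto _).comp ht
      show graphonTV W ν.1 ≤ _
      rw [tv_eq hW ν.2 hs, ← ht'.liminf_eq]
      exact liminf_le_liminf (Eventually.of_forall fun n => tv_ge (hWs n) (νs n).2)
    · have hev : ∀ᶠ n in atTop, graphonTV (Wseq n) (νs n).1 = ⊤ := by
        have hn : ∫ x, (∫ t, well t ∂(ν.1 x)) ∂mu01 ≠ 0 := fun h => hs ((supp_all ν.2).2 h)
        have hw := hc well well_cont ⟨1, well_bound⟩ (fun _ => 1)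
          (integrable_const (μ := mu01) (1 : ℝ))
        simp only [one_mul] at hw
        have hne := hw.eventually_ne hn
        filter_upwards [hne] with n hn'
        unfold graphonTV
        rw [if_neg]
        exact fun h => hn' ((supp_all (νs n).2).1 h)
      have : liminf (fun n => graphonTV (Wseq n) (νs n).1) atTop = ⊤ := by
        rw [liminf_congr hev]
        exact liminf_const _
      show _ ≤ liminf (fun n => graphonTV (Wseq n) (νs n).1) atTop
      rw [this]
      exact le_top
  · intro ν
    have hc : NarrowConv (fun _ => ν.1) ν.1 := fun f _ _ g _ => tendsto_const_nhds
    refine ⟨fun _ => ν, hc, ?_⟩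
    by_cases hs : ∀ᵐ x ∂mu01, ν.1 x ({-1, 1} : Set ℝ) = 1
    · have ht := energy_tendsto hWs hW hD hcut (fun _ => ν.2) ν.2 hc
      have ht' := (continuous_coe_real_ereal.tendsto _).comp ht
      show limsup (fun n => graphonTV (Wseq n) ν.1) atTop ≤ graphonTV W ν.1
      rw [tv_eq hW ν.2 hs, ← ht'.limsup_eq]
      refine le_of_eq ?_
      congr 1
      ext n
      exact tv_eq (hWs n) ν.2 hs
    · have : graphonTV W ν.1 = ⊤ := by
        exact if_neg hs
      show _ ≤ graphonTV W ν.1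
      rw [this]
      exact le_top
end
end

section
/- Let V_n ∈ L¹((0,1)²) be a sequence with sup_n ‖V_n‖_{L¹} < ∞ and ‖V_n‖_□ → 0, let f : [−1,1]² → ℝ be continuous, and let u_n : (0,1) → [−1,1] be measurable functions. Then ∫₀¹∫₀¹ V_n(x,y) f(u_n(x),u_n(y)) dx dy → 0 as n → ∞. -/
open MeasureTheory Filter

noncomputable section

lemma aux_integral_eq (W H : ℝ → ℝ → ℝ)
    (hW : Integrable (Function.uncurry W) ((volume.restrict I01).prod (volume.restrict I01)))
    (hH : Measurable (Function.uncurry H)) (K : ℝ) (hK : ∀ x y, |H x y| ≤ K) :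
    Integrable (fun p : ℝ × ℝ => W p.1 p.2 * H p.1 p.2)
      ((volume.restrict I01).prod (volume.restrict I01)) ∧
    (∫ x in I01, ∫ y in I01, W x y * H x y) =
      ∫ p, W p.1 p.2 * H p.1 p.2 ∂((volume.restrict I01).prod (volume.restrict I01)) := by
  have h1 : Integrable (fun p : ℝ × ℝ => W p.1 p.2 * H p.1 p.2)
      ((volume.restrict I01).prod (volume.restrict I01)) := by
    refine Integrable.mul_bdd (c := K) (f := fun p : ℝ × ℝ => W p.1 p.2) (g := fun p : ℝ × ℝ => H p.1 p.2) hW hH.aestronglyMeasurable ?_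
    exact Eventually.of_forall fun p => hK p.1 p.2
  exact ⟨h1, (integral_prod _ h1).symm⟩

lemma aux_bound (W H : ℝ → ℝ → ℝ)
    (hW : Integrable (Function.uncurry W) ((volume.restrict I01).prod (volume.restrict I01)))
    (hH : Measurable (Function.uncurry H)) (K : ℝ) (hK : ∀ x y, |H x y| ≤ K) :
    |∫ x in I01, ∫ y in I01, W x y * H x y| ≤ K * ∫ x in I01, ∫ y in I01, |W x y| := by
  obtain ⟨h1, h2⟩ := aux_integral_eq W H hW hH K hK
  have h3 : (∫ x in I01, ∫ y in I01, |W x y|) =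
      ∫ p, |W p.1 p.2| ∂((volume.restrict I01).prod (volume.restrict I01)) :=
    (integral_prod (fun p : ℝ × ℝ => |W p.1 p.2|) hW.abs).symm
  rw [h2, h3, ← integral_const_mul]
  refine (abs_integral_le_integral_abs).trans ?_
  refine integral_mono h1.abs (hW.abs.const_mul K) fun p => ?_
  have := mul_le_mul_of_nonneg_right (hK p.1 p.2) (abs_nonneg (W p.1 p.2))
  simp only [abs_mul, Function.uncurry]
  linarith

lemma aux_le_cutNorm (W : ℝ → ℝ → ℝ)
    (hW : Integrable (Function.uncurry W) ((volume.restrict I01).prod (volume.restrict I01)))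
    (a b : ℝ → ℝ) (ha : Measurable a) (hb : Measurable b)
    (ha1 : ∀ x, a x ∈ Set.Icc (-1 : ℝ) 1) (hb1 : ∀ x, b x ∈ Set.Icc (-1 : ℝ) 1) :
    |∫ x in I01, ∫ y in I01, W x y * (a x * b y)| ≤ cutNorm W := by
  refine le_csSup ⟨1 * ∫ x in I01, ∫ y in I01, |W x y|, ?_⟩
    ⟨a, b, ha, hb, ha1, hb1, by simp only [mul_assoc]⟩
  rintro r ⟨f, g, hf, hg, hf1, hg1, rfl⟩
  have := aux_bound W (fun x y => f x * g y) hW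
    ((hf.comp measurable_fst).mul (hg.comp measurable_snd)) 1 (fun x y => by
      rw [abs_mul]
      exact mul_le_one₀ (abs_le.2 (hf1 x)) (abs_nonneg _) (abs_le.2 (hg1 y)))
  simpa only [mul_assoc] using this

/-- Indicator of the level set `⌊N s⌋ = i`. -/
def stepInd (N : ℕ) (i : ℤ) (s : ℝ) : ℝ := if ⌊(N : ℝ) * s⌋ = i then 1 else 0

lemma stepInd_meas (N : ℕ) (i : ℤ) : Measurable (stepInd N i) := by
  unfold stepInd
  refine Measurable.ite ?_ measurable_const measurable_const
  exact (Int.measurable_floor.comp (measurable_const.mul measurable_id)) (measurableSet_singleton i)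

lemma stepInd_mem (N : ℕ) (i : ℤ) (s : ℝ) : stepInd N i s ∈ Set.Icc (-1 : ℝ) 1 := by
  unfold stepInd
  split_ifs <;> norm_num

/-- Step approximation. -/
def stepFun (F : ℝ × ℝ → ℝ) (N : ℕ) (s t : ℝ) : ℝ :=
  ∑ i ∈ Finset.Icc (-(N : ℤ)) N, ∑ j ∈ Finset.Icc (-(N : ℤ)) N,
    F ((i : ℝ) / N, (j : ℝ) / N) * (stepInd N i s * stepInd N j t)

lemma floor_mem (N : ℕ) (s : ℝ) (hs : s ∈ Set.Icc (-1 : ℝ) 1) :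
    ⌊(N : ℝ) * s⌋ ∈ Finset.Icc (-(N : ℤ)) N := by
  have hN : (0 : ℝ) ≤ N := Nat.cast_nonneg N
  rw [Finset.mem_Icc]
  constructor
  · rw [Int.le_floor]
    push_cast
    nlinarith [hs.1]
  · have h : (⌊(N : ℝ) * s⌋ : ℝ) ≤ N := (Int.floor_le _).trans (by nlinarith [hs.2])
    exact_mod_cast h

lemma stepFun_eq (F : ℝ × ℝ → ℝ) (N : ℕ) (s t : ℝ) (hs : s ∈ Set.Icc (-1 : ℝ) 1)
    (ht : t ∈ Set.Icc (-1 : ℝ) 1) :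
    stepFun F N s t = F ((⌊(N : ℝ) * s⌋ : ℝ) / N, (⌊(N : ℝ) * t⌋ : ℝ) / N) := by
  unfold stepFun
  rw [Finset.sum_eq_single_of_mem _ (floor_mem N s hs),
    Finset.sum_eq_single_of_mem _ (floor_mem N t ht)]
  · simp [stepInd]
  · intro j _ hj
    simp [stepInd, hj.symm]
  · intro i _ hi
    simp [stepInd, hi.symm]

lemma floor_div (N : ℕ) (hN : 0 < N) (s : ℝ) (hs : s ∈ Set.Icc (-1 : ℝ) 1) :
    (⌊(N : ℝ) * s⌋ : ℝ) / N ∈ Set.Icc (-1 : ℝ) 1 ∧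
      |s - (⌊(N : ℝ) * s⌋ : ℝ) / N| ≤ 1 / N := by
  have hN' : (0 : ℝ) < N := Nat.cast_pos.2 hN
  have h := Finset.mem_Icc.1 (floor_mem N s hs)
  have h1 : (-(N : ℝ)) ≤ (⌊(N : ℝ) * s⌋ : ℝ) := by exact_mod_cast h.1
  have h2 : (⌊(N : ℝ) * s⌋ : ℝ) ≤ N := by exact_mod_cast h.2
  have h3 := Int.floor_le ((N : ℝ) * s)
  have h4 := (Int.lt_floor_add_one ((N : ℝ) * s)).le
  refine ⟨⟨?_, ?_⟩, ?_⟩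
  · rw [le_div_iff₀ hN']; linarith
  · rw [div_le_iff₀ hN']; linarith
  · have : s - (⌊(N : ℝ) * s⌋ : ℝ) / N = (N * s - ⌊(N : ℝ) * s⌋) / N := by
      field_simp
    rw [this, abs_of_nonneg (div_nonneg (by linarith) hN'.le)]
    gcongr
    linarith

lemma exists_step (f : ℝ × ℝ → ℝ)
    (hf : ContinuousOn f (Set.Icc (-1 : ℝ) 1 ×ˢ Set.Icc (-1 : ℝ) 1)) (e : ℝ) (he : 0 < e) :
    ∃ N : ℕ, ∀ s ∈ Set.Icc (-1 : ℝ) 1, ∀ t ∈ Set.Icc (-1 : ℝ) 1,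
      |f (s, t) - stepFun f N s t| ≤ e := by
  have huc := (isCompact_Icc.prod isCompact_Icc).uniformContinuousOn_of_continuous hf
  obtain ⟨d, hd, h⟩ := Metric.uniformContinuousOn_iff.1 huc e he
  obtain ⟨n, hn⟩ := exists_nat_one_div_lt hd
  refine ⟨n + 1, fun s hs t ht => ?_⟩
  obtain ⟨a1, a2⟩ := floor_div (n + 1) n.succ_pos s hs
  obtain ⟨b1, b2⟩ := floor_div (n + 1) n.succ_pos t ht
  rw [stepFun_eq f _ s t hs ht]
  refine (h (s, t) ⟨hs, ht⟩ _ ⟨a1, b1⟩ ?_).le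
  rw [Prod.dist_eq, max_lt_iff, Real.dist_eq, Real.dist_eq]
  push_cast at a2 b2 ⊢
  exact ⟨a2.trans_lt hn, b2.trans_lt hn⟩

lemma step_bound (W : ℝ → ℝ → ℝ)
    (hW : Integrable (Function.uncurry W) ((volume.restrict I01).prod (volume.restrict I01)))
    (f : ℝ × ℝ → ℝ) (N : ℕ) (u : ℝ → ℝ) (hu : Measurable u) :
    |∫ p, W p.1 p.2 * stepFun f N (u p.1) (u p.2)
        ∂((volume.restrict I01).prod (volume.restrict I01))| ≤
      (∑ i ∈ Finset.Icc (-(N : ℤ)) N, ∑ j ∈ Finset.Icc (-(N : ℤ)) N,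
        |f ((i : ℝ) / N, (j : ℝ) / N)|) * cutNorm W := by
  have key : ∀ i j : ℤ, Integrable (fun p : ℝ × ℝ =>
      W p.1 p.2 * (stepInd N i (u p.1) * stepInd N j (u p.2)))
        ((volume.restrict I01).prod (volume.restrict I01)) ∧ 
      |∫ p, W p.1 p.2 * (stepInd N i (u p.1) * stepInd N j (u p.2))
        ∂((volume.restrict I01).prod (volume.restrict I01))| ≤ cutNorm W := by
    intro i j
    have hi := (stepInd_meas N i).comp hu
    have hj := (stepInd_meas N j).comp hu
    obtain ⟨h1, h2⟩ := aux_integral_eq W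
      (fun x y => stepInd N i (u x) * stepInd N j (u y)) hW
      ((hi.comp measurable_fst).mul (hj.comp measurable_snd)) 1 (fun x y => by
        rw [abs_mul]
        exact mul_le_one₀ (abs_le.2 (stepInd_mem _ _ _)) (abs_nonneg _)
          (abs_le.2 (stepInd_mem _ _ _)))
    refine ⟨h1, ?_⟩
    rw [← h2]
    exact aux_le_cutNorm W hW _ _ hi hj (fun x => stepInd_mem _ _ _) (fun x => stepInd_mem _ _ _)
  have e1 : ∀ p : ℝ × ℝ, W p.1 p.2 * stepFun f N (u p.1) (u p.2) =
      ∑ i ∈ Finset.Icc (-(N : ℤ)) N, ∑ j ∈ Finset.Icc (-(N : ℤ)) N,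
        f ((i : ℝ) / N, (j : ℝ) / N) *
          (W p.1 p.2 * (stepInd N i (u p.1) * stepInd N j (u p.2))) := by
    intro p
    unfold stepFun
    simp only [Finset.mul_sum]
    refine Finset.sum_congr rfl fun i _ => Finset.sum_congr rfl fun j _ => by ring
  simp only [e1]
  rw [integral_finset_sum _ fun i _ => integrable_finset_sum _ fun j _ =>
    (key i j).1.const_mul _, Finset.sum_mul]
  refine (Finset.abs_sum_le_sum_abs _ _).trans (Finset.sum_le_sum fun i _ => ?_)
  rw [integral_finset_sum _ fun j _ => (key i j).1.const_mul _, Finset.sum_mul]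
  refine (Finset.abs_sum_le_sum_abs _ _).trans (Finset.sum_le_sum fun j _ => ?_)
  rw [integral_const_mul, abs_mul]
  exact mul_le_mul_of_nonneg_left (key i j).2 (abs_nonneg _)

lemma comp_meas (f : ℝ × ℝ → ℝ)
    (hf : ContinuousOn f (Set.Icc (-1 : ℝ) 1 ×ˢ Set.Icc (-1 : ℝ) 1))
    (u : ℝ → ℝ) (hu : Measurable u) (hur : ∀ x, u x ∈ Set.Icc (-1 : ℝ) 1) :
    Measurable (fun p : ℝ × ℝ => f (u p.1, u p.2)) := by
  have h1 := hf.restrict.measurable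
  exact h1.comp (Measurable.subtype_mk (h := fun p : ℝ × ℝ => ⟨hur p.1, hur p.2⟩)
    ((hu.comp measurable_fst).prodMk (hu.comp measurable_snd)))

lemma stepFun_meas (f : ℝ × ℝ → ℝ) (N : ℕ) (u : ℝ → ℝ) (hu : Measurable u) :
    Measurable (fun p : ℝ × ℝ => stepFun f N (u p.1) (u p.2)) := by
  unfold stepFun
  refine Finset.measurable_fun_sum _ fun i _ => Finset.measurable_fun_sum _ fun j _ => ?_
  exact measurable_const.mul ((((stepInd_meas N i).comp hu).comp measurable_fst).mul
    (((stepInd_meas N j).comp hu).comp measurable_snd))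

/-- If `V_n` are uniformly bounded in `L¹` and `‖V_n‖_□ → 0`, then for any continuous
`f : [−1,1]² → ℝ` and measurable `u_n : (0,1) → [−1,1]`,
`∫∫ V_n(x,y) f(u_n(x),u_n(y)) dx dy → 0`. -/
theorem cutNorm_to_zero_integral_to_zero
    (V : ℕ → ℝ → ℝ → ℝ) (hVmeas : ∀ n, Measurable (Function.uncurry (V n)))
    (hVint : ∀ n, IntegrableOn (Function.uncurry (V n)) (I01 ×ˢ I01))
    (hbd : ∃ C : ℝ, ∀ n, (∫ x in I01, ∫ y in I01, |V n x y|) ≤ C)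
    (hcut : Tendsto (fun n => cutNorm (V n)) atTop (nhds 0))
    (f : ℝ × ℝ → ℝ)
    (hf : ContinuousOn f (Set.Icc (-1 : ℝ) 1 ×ˢ Set.Icc (-1 : ℝ) 1))
    (u : ℕ → ℝ → ℝ) (hu : ∀ n, Measurable (u n))
    (hur : ∀ n x, u n x ∈ Set.Icc (-1 : ℝ) 1) :
    Tendsto (fun n => ∫ x in I01, ∫ y in I01, V n x y * f (u n x, u n y)) atTop
      (nhds 0) := by
  obtain ⟨C, hC⟩ := hbd
  have hW : ∀ n, Integrable (Function.uncurry (V n))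
      ((volume.restrict I01).prod (volume.restrict I01)) := by
    intro n
    rw [Measure.prod_restrict]
    exact hVint n
  obtain ⟨K, hK⟩ := (isCompact_Icc.prod isCompact_Icc).exists_bound_of_continuousOn hf
  rw [Metric.tendsto_atTop]
  intro ε hε
  have hC1 : 0 < |C| + 1 := by positivity
  obtain ⟨N, hN⟩ := exists_step f hf (ε / (2 * (|C| + 1))) (by positivity)
  set M : ℝ := ∑ i ∈ Finset.Icc (-(N : ℤ)) N, ∑ j ∈ Finset.Icc (-(N : ℤ)) N,
        |f ((i : ℝ) / N, (j : ℝ) / N)| with hM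
  have hlim : Tendsto (fun n => M * cutNorm (V n)) atTop (nhds 0) := by
    simpa using hcut.const_mul M
  obtain ⟨n0, hn0⟩ := Metric.tendsto_atTop.1 hlim (ε / 2) (by positivity)
  refine ⟨n0, fun n hn => ?_⟩
  have h1 := hn0 n hn
  rw [Real.dist_eq, sub_zero] at h1 ⊢
  have hm1 := comp_meas f hf (u n) (hu n) (hur n)
  have hm2 := stepFun_meas f N (u n) (hu n)
  obtain ⟨i1, q1⟩ := aux_integral_eq (V n) (fun x y => f (u n x, u n y)) (hW n) hm1 K
    (fun x y => hK _ ⟨hur n x, hur n y⟩)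
  have hdb : ∀ x y, |f (u n x, u n y) - stepFun f N (u n x) (u n y)| ≤ ε / (2 * (|C| + 1)) :=
    fun x y => hN _ (hur n x) _ (hur n y)
  obtain ⟨i2, q2⟩ := aux_integral_eq (V n)
    (fun x y => f (u n x, u n y) - stepFun f N (u n x) (u n y)) (hW n) (hm1.sub hm2) _ hdb
  have b2 := aux_bound (V n)
    (fun x y => f (u n x, u n y) - stepFun f N (u n x) (u n y)) (hW n) (hm1.sub hm2) _ hdb
  have b3 := step_bound (V n) (hW n) f N (u n) (hu n)
  rw [← hM] at b3
  have hs : (∫ p, V n p.1 p.2 * stepFun f N (u n p.1) (u n p.2)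
        ∂((volume.restrict I01).prod (volume.restrict I01))) =
      (∫ x in I01, ∫ y in I01, V n x y * f (u n x, u n y)) -
      ∫ x in I01, ∫ y in I01, V n x y * (f (u n x, u n y) - stepFun f N (u n x) (u n y)) := by
    rw [q1, q2, ← integral_sub i1 i2]
    refine integral_congr_ae (Eventually.of_forall fun p => ?_)
    simp only
    ring
  have b4 : ε / (2 * (|C| + 1)) * (∫ x in I01, ∫ y in I01, |V n x y|) ≤ ε / 2 := by
    calc _ ≤ ε / (2 * (|C| + 1)) * (|C| + 1) := by
          gcongr
          linarith [hC n, le_abs_self C]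
      _ = ε / 2 := by field_simp
  rw [hs] at b3
  have b5 := abs_sub_abs_le_abs_sub
    (∫ x in I01, ∫ y in I01, V n x y * f (u n x, u n y))
    (∫ x in I01, ∫ y in I01, V n x y * (f (u n x, u n y) - stepFun f N (u n x) (u n y)))
  have b6 := le_abs_self (M * cutNorm (V n))
  linarith
end
end

section
/- Let W_n, W ∈ L¹((0,1)²) be nonnegative and symmetric with sup_n ‖W_n‖_{L¹} < ∞ and ‖W_n − W‖_□ → 0, let f : ℝ² → ℝ be bounded and continuous, and let u_n : (0,1) → ℝ be measurable functions with sup_n ‖u_n‖_{L^∞} < ∞. Then: (a) the sequence of Young measures δ_{u_n} has a narrowly convergent subsequence; and (b) for every subsequence (n_k) such that δ_{u_{n_k}} converges narrowly to a Young measure ν, one has ∫₀¹∫₀¹ W_{n_k}(x,y) f(u_{n_k}(x), u_{n_k}(y)) dx dy → ∫₀¹∫₀¹ W(x,y) ∫_ℝ∫_ℝ f(λ,μ) dν_x(λ) dν_y(μ) dx dy. -/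
open MeasureTheory Filter

noncomputable section

/-- The Young measure associated with a measurable function `u`: `(δ_u)_x = δ_{u(x)}`. -/
def deltaYM (u : ℝ → ℝ) : ℝ → Measure ℝ := fun x => Measure.dirac (u x)

open ProbabilityTheory Topology BoundedContinuousFunction

lemma YM.I01_meas : MeasurableSet I01 := measurableSet_Ioo

/-- Lebesgue measure on the unit interval. -/
def YM.mI : Measure ℝ := volume.restrict I01

instance YM.mI_prob : IsProbabilityMeasure YM.mI :=
  ⟨by simp [YM.mI, I01]⟩

/-- Weak convergence tested against (integrable function of a fixed marginal) times
(bounded continuous). -/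
lemma YM.tendsto_marginal {X Z : Type*} [TopologicalSpace X] [MeasurableSpace X] [BorelSpace X]
    [NormalSpace X] [TopologicalSpace Z] [MeasurableSpace Z] [BorelSpace Z]
    (μ : Measure X) [IsProbabilityMeasure μ] [μ.WeaklyRegular]
    (ρs : ℕ → ProbabilityMeasure Z) (ρ : ProbabilityMeasure Z)
    (h : Tendsto ρs atTop (𝓝 ρ)) (p : Z → X) (hp : Continuous p) (hpm : Measurable p)
    (h1 : ∀ n, (ρs n : Measure Z).map p = μ) (h2 : (ρ : Measure Z).map p = μ)
    (g : X → ℝ) (hg : Integrable g μ) (F : Z → ℝ) (hF : Continuous F)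
    (C : ℝ) (hC : ∀ z, |F z| ≤ C) :
    Tendsto (fun n => ∫ z, g (p z) * F z ∂(ρs n : Measure Z)) atTop
      (𝓝 (∫ z, g (p z) * F z ∂(ρ : Measure Z))) := by
  have hC0 : 0 ≤ C := by
    obtain ⟨z⟩ : Nonempty Z := (ρ : Measure Z).nonempty_of_neZero
    exact (abs_nonneg _).trans (hC z)
  have key : ∀ w : X → ℝ, Integrable w μ → ∀ σ : ProbabilityMeasure Z,
      (σ : Measure Z).map p = μ → Integrable (fun z => w (p z) * F z) (σ : Measure Z) := by
    intro w hw σ hσ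
    have : Integrable (fun z => w (p z)) (σ : Measure Z) := by
      rw [← hσ] at hw
      exact hw.comp_measurable hpm
    exact this.mul_bdd (c := C) hF.measurable.aestronglyMeasurable (ae_of_all _ hC)
  have bd : ∀ w : X → ℝ, Integrable w μ → ∀ σ : ProbabilityMeasure Z,
      (σ : Measure Z).map p = μ →
      |∫ z, g (p z) * F z ∂(σ : Measure Z) - ∫ z, w (p z) * F z ∂(σ : Measure Z)|
        ≤ C * ∫ x, ‖g x - w x‖ ∂μ := by
    intro w hw σ hσ
    rw [← integral_sub (key g hg σ hσ) (key w hw σ hσ)]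
    have hi : Integrable (fun x => ‖g x - w x‖) μ := (hg.sub hw).norm
    have e : ∫ x, ‖g x - w x‖ ∂μ = ∫ z, ‖g (p z) - w (p z)‖ ∂(σ : Measure Z) := by
      rw [← hσ] at hi ⊢
      rw [integral_map hpm.aemeasurable hi.aestronglyMeasurable]
    rw [e, ← integral_const_mul, ← Real.norm_eq_abs]
    apply norm_integral_le_of_norm_le
    · rw [← hσ] at hi
      exact (hi.comp_measurable hpm).const_mul C
    · refine ae_of_all _ fun z => ?_
      rw [← sub_mul, norm_mul, mul_comm]
      exact mul_le_mul_of_nonneg_right (hC z) (norm_nonneg _)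
  rw [Metric.tendsto_atTop]
  intro ε hε
  obtain ⟨w, hw, hwi⟩ := hg.exists_boundedContinuous_integral_sub_le
    (ε := ε / (3 * (C + 1))) (by positivity)
  let G : Z →ᵇ ℝ := BoundedContinuousFunction.ofNormedAddCommGroup (fun z => w (p z) * F z)
    (by fun_prop) (‖w‖ * C) (fun z => by
      rw [norm_mul]
      exact mul_le_mul (w.norm_coe_le_norm _) (hC z) (norm_nonneg _) (norm_nonneg _))
  have hG := (ProbabilityMeasure.tendsto_iff_forall_integral_tendsto.1 h) G
  rw [Metric.tendsto_atTop] at hG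
  obtain ⟨N, hN⟩ := hG (ε / 3) (by positivity)
  refine ⟨N, fun n hn => ?_⟩
  have a1 := bd w hwi (ρs n) (h1 n)
  have a2 := bd w hwi ρ h2
  have a3 := hN n hn
  rw [Real.dist_eq] at a3 ⊢
  change |∫ z, w (p z) * F z ∂(ρs n : Measure Z) - ∫ z, w (p z) * F z ∂(ρ : Measure Z)| < _ at a3
  have a4 : C * ∫ x, ‖g x - w x‖ ∂μ < ε / 3 := by
    calc C * ∫ x, ‖g x - w x‖ ∂μ ≤ C * (ε / (3 * (C + 1))) :=
          mul_le_mul_of_nonneg_left hw hC0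
      _ < ε / 3 := by
          rw [← mul_div_assoc, div_lt_div_iff₀ (by positivity) (by positivity)]
          nlinarith
  rw [abs_lt] at a3 ⊢
  rw [abs_le] at a1 a2
  constructor <;> linarith [a1.1, a1.2, a2.1, a2.2, a3.1, a3.2]

/-- Graph measure of `u`. -/
def YM.P (u : ℝ → ℝ) (hu : Measurable u) : ProbabilityMeasure (ℝ × ℝ) :=
  ⟨YM.mI.map (fun x => (x, u x)),
    Measure.isProbabilityMeasure_map (by fun_prop)⟩

lemma YM.P_coe (u : ℝ → ℝ) (hu : Measurable u) :
    (YM.P u hu : Measure (ℝ × ℝ)) = YM.mI.map (fun x => (x, u x)) := rfl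

lemma YM.P_fst (u : ℝ → ℝ) (hu : Measurable u) :
    (YM.P u hu : Measure (ℝ × ℝ)).map Prod.fst = YM.mI := by
  rw [YM.P_coe, Measure.map_map measurable_fst (by fun_prop)]
  exact Measure.map_id

lemma YM.integral_P (u : ℝ → ℝ) (hu : Measurable u) (F : ℝ × ℝ → ℝ) (hF : AEStronglyMeasurable F (YM.P u hu : Measure (ℝ × ℝ))) :
    ∫ z, F z ∂(YM.P u hu : Measure (ℝ × ℝ)) = ∫ x, F (x, u x) ∂YM.mI := by
  rw [YM.P_coe] at hF ⊢
  rw [integral_map (by fun_prop) hF]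

lemma YM.compact (u : ℕ → ℝ → ℝ) (hu : ∀ n, Measurable (u n))
    (C : ℝ) (hC : ∀ n x, |u n x| ≤ C) :
    ∃ (π : ProbabilityMeasure (ℝ × ℝ)) (φ : ℕ → ℕ), StrictMono φ ∧
      Tendsto (fun k => YM.P (u (φ k)) (hu _)) atTop (𝓝 π) := by
  have hK : IsCompact (Set.Icc (0 : ℝ) 1 ×ˢ Set.Icc (-C) C) := isCompact_Icc.prod isCompact_Icc
  have := isCompact_setOfPred_probabilityMeasure_mass_eq_compl_isCompact_le
    (E := ℝ × ℝ) (u := fun _ => 0) (K := fun _ => Set.Icc (0 : ℝ) 1 ×ˢ Set.Icc (-C) C)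
    tendsto_const_nhds (fun _ => hK) (Or.inr monotone_const)
  obtain ⟨π, -, φ, hφ, h⟩ := this.isSeqCompact (x := fun n => YM.P (u n) (hu n)) (fun n _ => by
    apply le_of_eq
    rw [ProbabilityMeasure.null_iff_toMeasure_null, YM.P_coe,
      Measure.map_apply (by fun_prop) hK.measurableSet.compl, YM.mI,
      Measure.restrict_apply]
    · convert measure_empty (μ := (volume : Measure ℝ))
      ext x
      simp only [Set.mem_empty_iff_false, iff_false]
      rintro ⟨h, h2⟩
      exact h (Set.mem_prod.2 ⟨⟨h2.1.le, h2.2.le⟩, abs_le.1 (hC n x)⟩)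
    · exact (measurable_id.prodMk (hu n)) hK.measurableSet.compl)
  exact ⟨π, φ, hφ, h⟩

lemma YM.limit_fst (u : ℕ → ℝ → ℝ) (hu : ∀ n, Measurable (u n)) (π : ProbabilityMeasure (ℝ × ℝ))
    (h : Tendsto (fun k => YM.P (u k) (hu _)) atTop (𝓝 π)) :
    (π : Measure (ℝ × ℝ)).map Prod.fst = YM.mI := by
  have h2 := ProbabilityMeasure.tendsto_map_of_tendsto_of_continuous _ _ h continuous_fst
  have h3 : ∀ k, (YM.P (u k) (hu k)).map continuous_fst.measurable.aemeasurable
      = (⟨YM.mI, YM.mI_prob⟩ : ProbabilityMeasure ℝ) := by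
    intro k
    apply Subtype.ext
    exact YM.P_fst _ _
  simp only [h3] at h2
  have := tendsto_nhds_unique h2 tendsto_const_nhds
  exact congrArg (fun x : ProbabilityMeasure ℝ => (x : Measure ℝ)) this

/-- The kernel of a Young measure. -/
def YM.ker (ν : ℝ → Measure ℝ) (h : IsYoungMeasure ν) : Kernel ℝ ℝ := ⟨ν, h.1⟩

instance YM.ker_markov (ν : ℝ → Measure ℝ) (h : IsYoungMeasure ν) : IsMarkovKernel (YM.ker ν h) :=
  ⟨h.2⟩

/-- The measure on the product associated with a Young measure. -/
def YM.Q (ν : ℝ → Measure ℝ) (h : IsYoungMeasure ν) : ProbabilityMeasure (ℝ × ℝ) :=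
  ⟨YM.mI ⊗ₘ YM.ker ν h, inferInstance⟩

lemma YM.Q_coe (ν : ℝ → Measure ℝ) (h : IsYoungMeasure ν) :
    (YM.Q ν h : Measure (ℝ × ℝ)) = YM.mI ⊗ₘ YM.ker ν h := rfl

lemma YM.Q_fst (ν : ℝ → Measure ℝ) (h : IsYoungMeasure ν) :
    (YM.Q ν h : Measure (ℝ × ℝ)).map Prod.fst = YM.mI :=
  Measure.fst_compProd _ _

lemma YM.integral_Q (ν : ℝ → Measure ℝ) (h : IsYoungMeasure ν) (F : ℝ × ℝ → ℝ)
    (hF : Integrable F (YM.Q ν h : Measure (ℝ × ℝ))) :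
    ∫ z, F z ∂(YM.Q ν h : Measure (ℝ × ℝ)) = ∫ x, ∫ t, F (x, t) ∂(ν x) ∂YM.mI := by
  rw [YM.Q_coe] at hF ⊢
  rw [Measure.integral_compProd hF]
  rfl

lemma YM.integrable_fst_mul (σ : ProbabilityMeasure (ℝ × ℝ))
    (hσ : (σ : Measure (ℝ × ℝ)).map Prod.fst = YM.mI) (g : ℝ → ℝ) (hg : Integrable g YM.mI)
    (f : ℝ → ℝ) (hf : Continuous f) (C : ℝ) (hC : ∀ s, |f s| ≤ C) :
    Integrable (fun z : ℝ × ℝ => g z.1 * f z.2) (σ : Measure (ℝ × ℝ)) := by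
  have : Integrable (fun z : ℝ × ℝ => g z.1) (σ : Measure (ℝ × ℝ)) := by
    rw [← hσ] at hg
    exact hg.comp_measurable measurable_fst
  exact this.mul_bdd (c := C) (by fun_prop) (ae_of_all _ fun z => hC z.2)

lemma YM.int_delta (u : ℝ → ℝ) (hu : Measurable u) (g : ℝ → ℝ) (hg : Integrable g YM.mI)
    (f : ℝ → ℝ) (hf : Continuous f) (C : ℝ) (hC : ∀ s, |f s| ≤ C) :
    ∫ z, g z.1 * f z.2 ∂(YM.P u hu : Measure (ℝ × ℝ))
      = ∫ x in I01, g x * ∫ t, f t ∂(deltaYM u x) := by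
  rw [YM.integral_P _ _ _ (YM.integrable_fst_mul _ (YM.P_fst u hu) g hg f hf C hC).1]
  simp [deltaYM, YM.mI]

lemma YM.int_nu (ν : ℝ → Measure ℝ) (h : IsYoungMeasure ν) (g : ℝ → ℝ) (hg : Integrable g YM.mI)
    (f : ℝ → ℝ) (hf : Continuous f) (C : ℝ) (hC : ∀ s, |f s| ≤ C) :
    ∫ z, g z.1 * f z.2 ∂(YM.Q ν h : Measure (ℝ × ℝ))
      = ∫ x in I01, g x * ∫ t, f t ∂(ν x) := by
  rw [YM.integral_Q _ _ _ (YM.integrable_fst_mul _ (YM.Q_fst ν h) g hg f hf C hC)]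
  simp [integral_const_mul, YM.mI]

lemma YM.narrow_of_tendsto (u : ℕ → ℝ → ℝ) (hu : ∀ n, Measurable (u n))
    (ν : ℝ → Measure ℝ) (hν : IsYoungMeasure ν)
    (h : Tendsto (fun k => YM.P (u k) (hu _)) atTop (𝓝 (YM.Q ν hν))) :
    NarrowConv (fun k => deltaYM (u k)) ν := by
  rintro f hf ⟨C, hC⟩ g hg
  have := YM.tendsto_marginal YM.mI _ _ h Prod.fst continuous_fst measurable_fst
    (fun n => YM.P_fst _ _) (YM.Q_fst ν hν) g hg (fun z => f z.2) (by fun_prop) C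
    (fun z => hC z.2)
  rw [YM.int_nu ν hν g hg f hf C hC] at this
  refine this.congr fun n => ?_
  exact YM.int_delta _ _ g hg f hf C hC

lemma YM.exists_nu (π : ProbabilityMeasure (ℝ × ℝ))
    (h : (π : Measure (ℝ × ℝ)).map Prod.fst = YM.mI) :
    ∃ ν, ∃ hν : IsYoungMeasure ν, π = YM.Q ν hν := by
  refine ⟨fun x => (π : Measure (ℝ × ℝ)).condKernel x, ⟨Kernel.measurable _, fun x => inferInstance⟩, ?_⟩
  apply Subtype.ext
  have := (π : Measure (ℝ × ℝ)).disintegrate (π : Measure (ℝ × ℝ)).condKernel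
  rw [Measure.fst, h] at this
  exact this.symm

lemma YM.tendsto_of_narrow (u : ℕ → ℝ → ℝ) (hu : ∀ n, Measurable (u n))
    (C : ℝ) (hC : ∀ n x, |u n x| ≤ C)
    (ν : ℝ → Measure ℝ) (hν : IsYoungMeasure ν) (h : NarrowConv (fun k => deltaYM (u k)) ν) :
    Tendsto (fun k => YM.P (u k) (hu _)) atTop (𝓝 (YM.Q ν hν)) := by
  apply tendsto_of_subseq_tendsto
  intro ns hns
  obtain ⟨π, φ, hφ, hπ⟩ := YM.compact (fun k => u (ns k)) (fun k => hu _) C (fun k => hC _)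
  refine ⟨φ, ?_⟩
  suffices π = YM.Q ν hν by rwa [← this]
  refine Subtype.ext (?_ : (π : Measure (ℝ × ℝ)) = (YM.Q ν hν : Measure (ℝ × ℝ)))
  apply Measure.ext_of_integral_mul_boundedContinuousFunction
  intro g f
  have hg : Integrable g YM.mI := g.integrable _
  have e1 := h f f.continuous ⟨‖f‖, f.norm_coe_le_norm⟩ g hg
  have hfst := YM.limit_fst _ (fun k => hu (ns (φ k))) _ hπ
  have e2 := YM.tendsto_marginal YM.mI _ _ hπ Prod.fst continuous_fst measurable_fst
    (fun n => YM.P_fst _ _) hfst g hg (fun z => f z.2) (by fun_prop) ‖f‖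
    (fun z => f.norm_coe_le_norm _)
  have e3 := e1.comp (hns.comp hφ.tendsto_atTop)
  have e4 := e2.congr fun n => YM.int_delta _ _ g hg f f.continuous ‖f‖ f.norm_coe_le_norm
  have := tendsto_nhds_unique e4 e3
  rw [← YM.int_nu ν hν g hg f f.continuous ‖f‖ f.norm_coe_le_norm] at this
  exact this

lemma YM.integrable_mm (V : ℝ → ℝ → ℝ)
    (h : IntegrableOn (Function.uncurry V) (I01 ×ˢ I01)) :
    Integrable (fun z : ℝ × ℝ => V z.1 z.2) (YM.mI.prod YM.mI) := by
  rw [YM.mI, Measure.prod_restrict]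
  exact h

lemma YM.iterated (V : ℝ → ℝ → ℝ)
    (h : Integrable (fun z : ℝ × ℝ => V z.1 z.2) (YM.mI.prod YM.mI)) :
    ∫ x in I01, ∫ y in I01, V x y = ∫ z, V z.1 z.2 ∂(YM.mI.prod YM.mI) :=
  (integral_prod (μ := YM.mI) (ν := YM.mI) _ h).symm

/-- Convergence for a fixed kernel. -/
lemma YM.fixed (W : ℝ → ℝ → ℝ) (hWmeas : Measurable (Function.uncurry W))
    (hW : Integrable (fun z : ℝ × ℝ => W z.1 z.2) (YM.mI.prod YM.mI))
    (f : ℝ → ℝ → ℝ) (hfcont : Continuous (Function.uncurry f))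
    (C : ℝ) (hC : ∀ a b, |f a b| ≤ C)
    (u : ℕ → ℝ → ℝ) (hu : ∀ n, Measurable (u n))
    (ν : ℝ → Measure ℝ) (hν : IsYoungMeasure ν)
    (h : Tendsto (fun k => YM.P (u k) (hu _)) atTop (𝓝 (YM.Q ν hν))) :
    Tendsto (fun k => ∫ x in I01, ∫ y in I01, W x y * f (u k x) (u k y)) atTop
      (𝓝 (∫ x in I01, ∫ y in I01, W x y * ∫ t, (∫ s, f s t ∂(ν x)) ∂(ν y))) := by
  have hfm : Measurable (Function.uncurry f) := hfcont.measurable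
  have hfc : ∀ {A : Type} [TopologicalSpace A] (a b : A → ℝ), Continuous a → Continuous b →
      Continuous fun z => f (a z) (b z) := fun a b ha hb => hfcont.comp (ha.prodMk hb)
  have hfm' : ∀ {A : Type} [MeasurableSpace A] (a b : A → ℝ), Measurable a → Measurable b →
      Measurable fun z => f (a z) (b z) := fun a b ha hb => hfm.comp (ha.prodMk hb)
  have hpp : Tendsto (fun k => (YM.P (u k) (hu k)).prod (YM.P (u k) (hu k))) atTop
      (𝓝 ((YM.Q ν hν).prod (YM.Q ν hν))) :=
    (ProbabilityMeasure.continuous_prod.tendsto (YM.Q ν hν, YM.Q ν hν)).comp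
      (h.prodMk_nhds h)
  have marg : ∀ σ : ProbabilityMeasure (ℝ × ℝ), (σ : Measure (ℝ × ℝ)).map Prod.fst = YM.mI →
      ((σ.prod σ : ProbabilityMeasure _) : Measure ((ℝ × ℝ) × (ℝ × ℝ))).map
        (fun z => (z.1.1, z.2.1)) = YM.mI.prod YM.mI := by
    intro σ hσ
    have := Measure.map_prod_map (σ : Measure (ℝ × ℝ)) (σ : Measure (ℝ × ℝ))
      measurable_fst measurable_fst
    rw [hσ] at this
    exact this.symm
  have t := YM.tendsto_marginal (YM.mI.prod YM.mI) _ _ hpp (fun z => (z.1.1, z.2.1))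
    (by fun_prop) (by fun_prop) (fun n => marg _ (YM.P_fst _ _)) (marg _ (YM.Q_fst _ _))
    (fun z => W z.1 z.2) hW (fun z => f z.1.2 z.2.2) (hfc _ _ (by fun_prop) (by fun_prop)) C
    (fun z => hC _ _)
  have hint : ∀ σ : ProbabilityMeasure (ℝ × ℝ), (σ : Measure (ℝ × ℝ)).map Prod.fst = YM.mI →
      Integrable (fun z : (ℝ × ℝ) × (ℝ × ℝ) => W z.1.1 z.2.1 * f z.1.2 z.2.2)
        ((σ : Measure (ℝ × ℝ)).prod (σ : Measure (ℝ × ℝ))) := by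
    intro σ hσ
    have h1 : Integrable (fun z : (ℝ × ℝ) × (ℝ × ℝ) => W z.1.1 z.2.1)
        ((σ : Measure (ℝ × ℝ)).prod (σ : Measure (ℝ × ℝ))) := by
      have h2 := hW
      rw [← marg σ hσ] at h2
      exact h2.comp_measurable (by fun_prop)
    exact h1.mul_bdd (c := C) (hfm' _ _ (by fun_prop) (by fun_prop)).aestronglyMeasurable
      (ae_of_all _ fun z => hC _ _)
  have hWm' : ∀ {A : Type} [MeasurableSpace A] (a b : A → ℝ), Measurable a → Measurable b →
      Measurable fun z => W (a z) (b z) := fun a b ha hb => hWmeas.comp (ha.prodMk hb)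
  have eP : ∀ k, ∫ z, W z.1.1 z.2.1 * f z.1.2 z.2.2
      ∂(((YM.P (u k) (hu k)).prod (YM.P (u k) (hu k)) : ProbabilityMeasure _) :
        Measure ((ℝ × ℝ) × (ℝ × ℝ))) =
      ∫ x in I01, ∫ y in I01, W x y * f (u k x) (u k y) := by
    intro k
    rw [YM.iterated (fun x y => W x y * f (u k x) (u k y))]
    · rw [ProbabilityMeasure.toMeasure_prod, YM.P_coe,
        Measure.map_prod_map _ _ (measurable_id'.prodMk (hu k)) (measurable_id'.prodMk (hu k)),
        integral_map]
      · rfl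
      · have := hu k
        fun_prop
      · exact ((hWm' _ _ (by fun_prop) (by fun_prop)).mul
          (hfm' _ _ (by fun_prop) (by fun_prop))).aestronglyMeasurable
    · have := hu k
      exact hW.mul_bdd (c := C) (hfm' _ _ (by fun_prop) (by fun_prop)).aestronglyMeasurable
        (ae_of_all _ fun z => hC _ _)
  have eQ : ∫ z, W z.1.1 z.2.1 * f z.1.2 z.2.2
      ∂(((YM.Q ν hν).prod (YM.Q ν hν) : ProbabilityMeasure _) :
        Measure ((ℝ × ℝ) × (ℝ × ℝ))) =
      ∫ x in I01, ∫ y in I01, W x y * ∫ t, (∫ s, f s t ∂(ν x)) ∂(ν y) := by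
    have hprob := hν.2
    have hi := hint (YM.Q ν hν) (YM.Q_fst _ _)
    rw [ProbabilityMeasure.toMeasure_prod, integral_prod _ hi]
    rw [YM.integral_Q ν hν _ hi.integral_prod_left]
    change _ = ∫ x, ∫ y, W x y * ∫ t, (∫ s, f s t ∂(ν x)) ∂(ν y) ∂YM.mI ∂YM.mI
    apply integral_congr_ae
    filter_upwards [hW.prod_right_ae] with x hx
    have hx' : Integrable (fun y => W x y) YM.mI := hx
    have hsm : StronglyMeasurable fun p : ℝ × ℝ => ∫ t, f p.1 t ∂(ν p.2) := by
      have := StronglyMeasurable.integral_kernel_prod_right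
        (κ := (YM.ker ν hν).comap (Prod.snd : ℝ × ℝ → ℝ) measurable_snd)
        (f := fun p t => f p.1 t)
        (hfm' _ _ (by fun_prop) (by fun_prop)).stronglyMeasurable
      exact this
    have step : ∀ s, ∫ z, W x z.1 * f s z.2 ∂(YM.Q ν hν : Measure (ℝ × ℝ))
        = ∫ y, W x y * ∫ t, f s t ∂(ν y) ∂YM.mI := by
      intro s
      rw [YM.integral_Q]
      · simp only [integral_const_mul]
      · exact YM.integrable_fst_mul _ (YM.Q_fst ν hν) (fun y => W x y) hx' (fun t => f s t)
          (hfc _ _ (by fun_prop) (by fun_prop)) C (fun t => hC _ _)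
    simp only [step]
    rw [integral_integral_swap]
    · apply integral_congr_ae
      refine ae_of_all _ fun y => ?_
      simp only [integral_const_mul]
      congr 1
      rw [integral_integral_swap]
      exact (integrable_const C).mono'
        (hfm' _ _ (by fun_prop) (by fun_prop)).aestronglyMeasurable (ae_of_all _ fun z => hC _ _)
    · refine Integrable.mul_bdd (c := C) (hx'.comp_snd (ν x)) hsm.aestronglyMeasurable
        (ae_of_all _ fun p => ?_)
      calc ‖∫ t, f p.1 t ∂(ν p.2)‖ ≤ C * (ν p.2).real Set.univ :=
            norm_integral_le_of_norm_le_const (ae_of_all _ fun t => hC _ _)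
        _ = C := by simp
  rw [eQ] at t
  exact t.congr eP

lemma YM.le_cutNorm (V : ℝ → ℝ → ℝ)
    (hV : Integrable (fun z : ℝ × ℝ => V z.1 z.2) (YM.mI.prod YM.mI))
    (a b : ℝ → ℝ) (ha : Measurable a) (hb : Measurable b)
    (ha1 : ∀ x, a x ∈ Set.Icc (-1 : ℝ) 1) (hb1 : ∀ x, b x ∈ Set.Icc (-1 : ℝ) 1) :
    |∫ z, V z.1 z.2 * a z.1 * b z.2 ∂(YM.mI.prod YM.mI)| ≤ cutNorm V := by
  have hi : ∀ a b : ℝ → ℝ, Measurable a → Measurable b → (∀ x, a x ∈ Set.Icc (-1 : ℝ) 1) →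
      (∀ x, b x ∈ Set.Icc (-1 : ℝ) 1) →
      Integrable (fun z : ℝ × ℝ => V z.1 z.2 * a z.1 * b z.2) (YM.mI.prod YM.mI) := by
    intro a b ha hb ha1 hb1
    refine (hV.mul_bdd (c := 1) (ha.comp measurable_fst).aestronglyMeasurable (ae_of_all _ fun z => ?_)).mul_bdd (c := 1)
      (hb.comp measurable_snd).aestronglyMeasurable (ae_of_all _ fun z => ?_)
    · exact abs_le.2 (ha1 z.1)
    · exact abs_le.2 (hb1 z.2)
  rw [← YM.iterated (fun x y => V x y * a x * b y) (hi a b ha hb ha1 hb1)]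
  refine le_csSup ⟨∫ z, ‖V z.1 z.2‖ ∂(YM.mI.prod YM.mI), ?_⟩ ⟨a, b, ha, hb, ha1, hb1, rfl⟩
  rintro r ⟨a, b, ha, hb, ha1, hb1, rfl⟩
  rw [YM.iterated (fun x y => V x y * a x * b y) (hi a b ha hb ha1 hb1), ← Real.norm_eq_abs]
  refine norm_integral_le_of_norm_le hV.norm (ae_of_all _ fun z => ?_)
  rw [norm_mul, norm_mul]
  have h1 : ‖a z.1‖ ≤ 1 := abs_le.2 (ha1 z.1)
  have h2 : ‖b z.2‖ ≤ 1 := abs_le.2 (hb1 z.2)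
  calc ‖V z.1 z.2‖ * ‖a z.1‖ * ‖b z.2‖ ≤ ‖V z.1 z.2‖ * 1 * 1 := by gcongr
    _ = _ := by ring

lemma YM.cut_tendsto (V : ℕ → ℝ → ℝ → ℝ)
    (hV : ∀ n, Integrable (fun z : ℝ × ℝ => V n z.1 z.2) (YM.mI.prod YM.mI))
    (M : ℝ) (hM : ∀ n, ∫ z, ‖V n z.1 z.2‖ ∂(YM.mI.prod YM.mI) ≤ M)
    (hcut : Tendsto (fun n => cutNorm (V n)) atTop (𝓝 0))
    (f : ℝ → ℝ → ℝ) (hfcont : Continuous (Function.uncurry f))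
    (K : ℝ) (hK : ∀ a b, |f a b| ≤ K)
    (u : ℕ → ℝ → ℝ) (hu : ∀ n, Measurable (u n)) (C : ℝ) (hC : ∀ n x, |u n x| ≤ C) :
    Tendsto (fun n => ∫ z, V n z.1 z.2 * f (u n z.1) (u n z.2) ∂(YM.mI.prod YM.mI)) atTop
      (𝓝 0) := by
  have hM0 : 0 ≤ M := (integral_nonneg fun _ => norm_nonneg _).trans (hM 0)
  have hK0 : 0 ≤ K := (abs_nonneg _).trans (hK 0 0)
  have hfm : Measurable (Function.uncurry f) := hfcont.measurable
  have hfm' : ∀ {A : Type} [MeasurableSpace A] (a b : A → ℝ), Measurable a → Measurable b →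
      Measurable fun z => f (a z) (b z) := fun a b ha hb => hfm.comp (ha.prodMk hb)
  rw [Metric.tendsto_atTop]
  intro ε hε
  have hcomp : IsCompact (Set.Icc (-C - 1) (C + 1) ×ˢ Set.Icc (-C - 1) (C + 1)) :=
    isCompact_Icc.prod isCompact_Icc
  have huc := hcomp.uniformContinuousOn_of_continuous hfcont.continuousOn
  rw [Metric.uniformContinuousOn_iff] at huc
  obtain ⟨δ₀, hδ₀, hδ⟩ := huc (ε / (2 * (M + 1))) (by positivity)
  set δ := min (δ₀ / 2) 1 with hδdef
  have δpos : 0 < δ := by positivity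
  have δlt : δ < δ₀ := (min_le_left _ _).trans_lt (by linarith)
  have δle : δ ≤ 1 := min_le_right _ _
  -- quantisation
  have hfl : ∀ s : ℝ, δ * ⌊s / δ⌋ ≤ s ∧ s < δ * ⌊s / δ⌋ + δ := by
    intro s
    have h1 := Int.floor_le (s / δ)
    have h2 := Int.lt_floor_add_one (s / δ)
    rw [le_div_iff₀ δpos] at h1
    rw [div_lt_iff₀ δpos] at h2
    constructor <;> nlinarith
  have happ : ∀ s t : ℝ, |s| ≤ C → |t| ≤ C →
      |f s t - f (δ * ⌊s / δ⌋) (δ * ⌊t / δ⌋)| ≤ ε / (2 * (M + 1)) := by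
    intro s t hs ht
    have hs' := abs_le.1 hs
    have ht' := abs_le.1 ht
    have h1 := hfl s
    have h2 := hfl t
    refine (hδ (s, t) ?_ (δ * ⌊s / δ⌋, δ * ⌊t / δ⌋) ?_ ?_).le
    · constructor <;> constructor <;> dsimp only <;> linarith
    · constructor <;> constructor <;> dsimp only <;> linarith
    · rw [Prod.dist_eq, max_lt_iff, Real.dist_eq, Real.dist_eq, abs_lt, abs_lt]
      refine ⟨⟨?_, ?_⟩, ?_, ?_⟩ <;> dsimp only <;> linarith
  let S : Finset ℤ := Finset.Icc ⌊-C / δ⌋ ⌊C / δ⌋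
  have hS : ∀ s : ℝ, |s| ≤ C → ⌊s / δ⌋ ∈ S := by
    intro s hs
    have hs' := abs_le.1 hs
    refine Finset.mem_Icc.2 ⟨Int.floor_le_floor ?_, Int.floor_le_floor ?_⟩
    · exact div_le_div_of_nonneg_right hs'.1 δpos.le
    · exact div_le_div_of_nonneg_right hs'.2 δpos.le
  let e : ℤ → ℝ → ℝ := fun k s => if ⌊s / δ⌋ = k then 1 else 0
  have he : ∀ k, Measurable (e k) := by
    intro k
    refine Measurable.ite ?_ measurable_const measurable_const
    exact (Int.measurable_floor.comp (measurable_id.div_const δ)) (measurableSet_singleton k)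
  have he1 : ∀ k s, e k s ∈ Set.Icc (-1 : ℝ) 1 := by
    intro k s
    simp only [e]
    split_ifs <;> constructor <;> norm_num
  have hsum : ∀ s t : ℝ, |s| ≤ C → |t| ≤ C → f (δ * ⌊s / δ⌋) (δ * ⌊t / δ⌋)
      = ∑ k ∈ S, ∑ l ∈ S, f (δ * k) (δ * l) * (e k s * e l t) := by
    intro s t hs ht
    rw [Finset.sum_eq_single_of_mem _ (hS s hs), Finset.sum_eq_single_of_mem _ (hS t ht)]
    · simp [e]
    · intro l _ hl
      simp [e, hl.symm]
    · intro k _ hk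
      simp [e, hk.symm]
  let N : ℝ := ∑ k ∈ S, ∑ l ∈ S, K
  have hN0 : 0 ≤ N := Finset.sum_nonneg fun _ _ => Finset.sum_nonneg fun _ _ => hK0
  have main : ∀ n, |∫ z, V n z.1 z.2 * f (u n z.1) (u n z.2) ∂(YM.mI.prod YM.mI)|
      ≤ ε / (2 * (M + 1)) * M + N * cutNorm (V n) := by
    intro n
    have hun := hu n
    have hterm : ∀ k l : ℤ, Integrable (fun z : ℝ × ℝ =>
        f (δ * k) (δ * l) * (V n z.1 z.2 * e k (u n z.1) * e l (u n z.2)))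
        (YM.mI.prod YM.mI) := by
      intro k l
      refine Integrable.const_mul ?_ _
      refine ((hV n).mul_bdd (c := 1) ?_ (ae_of_all _ fun z => ?_)).mul_bdd (c := 1) ?_
        (ae_of_all _ fun z => ?_)
      · exact ((he k).comp (hun.comp measurable_fst)).aestronglyMeasurable
      · exact abs_le.2 (he1 _ _)
      · exact ((he l).comp (hun.comp measurable_snd)).aestronglyMeasurable
      · exact abs_le.2 (he1 _ _)
    have hq : (fun z : ℝ × ℝ => V n z.1 z.2 * f (δ * ⌊u n z.1 / δ⌋) (δ * ⌊u n z.2 / δ⌋))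
        = fun z => ∑ k ∈ S, ∑ l ∈ S,
          f (δ * k) (δ * l) * (V n z.1 z.2 * e k (u n z.1) * e l (u n z.2)) := by
      funext z
      rw [hsum _ _ (hC n _) (hC n _), Finset.mul_sum]
      refine Finset.sum_congr rfl fun k _ => ?_
      rw [Finset.mul_sum]
      refine Finset.sum_congr rfl fun l _ => ?_
      ring
    have hqi : Integrable
        (fun z : ℝ × ℝ => V n z.1 z.2 * f (δ * ⌊u n z.1 / δ⌋) (δ * ⌊u n z.2 / δ⌋))
        (YM.mI.prod YM.mI) := by
      rw [hq]
      exact integrable_finsetSum _ fun k _ => integrable_finsetSum _ fun l _ => hterm k l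
    have hfi : Integrable (fun z : ℝ × ℝ => V n z.1 z.2 * f (u n z.1) (u n z.2))
        (YM.mI.prod YM.mI) :=
      (hV n).mul_bdd (c := K) (hfm' _ _ (by fun_prop) (by fun_prop)).aestronglyMeasurable
        (ae_of_all _ fun z => hK _ _)
    have b1 : |∫ z, V n z.1 z.2 * f (δ * ⌊u n z.1 / δ⌋) (δ * ⌊u n z.2 / δ⌋)
        ∂(YM.mI.prod YM.mI)| ≤ N * cutNorm (V n) := by
      rw [hq, integral_finsetSum _ fun k _ => integrable_finsetSum _ fun l _ => hterm k l]
      refine (Finset.abs_sum_le_sum_abs _ _).trans ?_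
      rw [Finset.sum_mul]
      refine Finset.sum_le_sum fun k _ => ?_
      rw [integral_finsetSum _ fun l _ => hterm k l]
      refine (Finset.abs_sum_le_sum_abs _ _).trans ?_
      rw [Finset.sum_mul]
      refine Finset.sum_le_sum fun l _ => ?_
      rw [integral_const_mul, abs_mul]
      refine mul_le_mul (hK _ _) ?_ (abs_nonneg _) hK0
      exact YM.le_cutNorm (V n) (hV n) (fun x => e k (u n x)) (fun x => e l (u n x))
        ((he k).comp hun) ((he l).comp hun) (fun _ => he1 _ _) (fun _ => he1 _ _)
    have b2 : |∫ z, V n z.1 z.2 * f (u n z.1) (u n z.2) ∂(YM.mI.prod YM.mI)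
        - ∫ z, V n z.1 z.2 * f (δ * ⌊u n z.1 / δ⌋) (δ * ⌊u n z.2 / δ⌋) ∂(YM.mI.prod YM.mI)|
        ≤ ε / (2 * (M + 1)) * M := by
      rw [← integral_sub hfi hqi, ← Real.norm_eq_abs]
      refine le_trans ?_ (mul_le_mul_of_nonneg_left (hM n) (by positivity))
      rw [← integral_const_mul]
      refine norm_integral_le_of_norm_le ((hV n).norm.const_mul _) (ae_of_all _ fun z => ?_)
      rw [← mul_sub, norm_mul, mul_comm]
      exact mul_le_mul_of_nonneg_right (happ _ _ (hC n _) (hC n _)) (norm_nonneg _)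
    rw [abs_le] at b1 b2 ⊢
    constructor <;> linarith [b1.1, b1.2, b2.1, b2.2]
  have hlim : Tendsto (fun n => ε / (2 * (M + 1)) * M + N * cutNorm (V n)) atTop
      (𝓝 (ε / (2 * (M + 1)) * M + N * 0)) := (hcut.const_mul N).const_add _
  have hlt : ε / (2 * (M + 1)) * M + N * 0 < ε := by
    rw [mul_zero, add_zero, div_mul_eq_mul_div, div_lt_iff₀ (by positivity)]
    nlinarith
  obtain ⟨n₀, hn₀⟩ := eventually_atTop.1 (hlim.eventually_lt_const hlt)
  refine ⟨n₀, fun n hn => ?_⟩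
  rw [Real.dist_eq, sub_zero]
  exact (main n).trans_lt (hn₀ n hn)

/-- Main convergence theorem: for kernels `W_n → W` in cut norm (uniformly bounded in `L¹`),
bounded continuous `f`, and uniformly bounded measurable `u_n`, (a) the Young measures
`δ_{u_n}` have a narrowly convergent subsequence, and (b) along any narrowly convergent
subsequence with limit `ν`, the energies converge to the graphon energy of `ν`. -/
theorem main_convergence
    (Wseq : ℕ → ℝ → ℝ → ℝ)
    (hWseqMeas : ∀ n, Measurable (Function.uncurry (Wseq n)))
    (hWseqNonneg : ∀ n x y, 0 ≤ Wseq n x y)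
    (hWseqSymm : ∀ n x y, Wseq n x y = Wseq n y x)
    (hWseqInt : ∀ n, IntegrableOn (Function.uncurry (Wseq n)) (I01 ×ˢ I01))
    (hWseqBd : ∃ C : ℝ, ∀ n, (∫ x in I01, ∫ y in I01, |Wseq n x y|) ≤ C)
    (W : ℝ → ℝ → ℝ) (hWmeas : Measurable (Function.uncurry W))
    (hWnonneg : ∀ x y, 0 ≤ W x y) (hWsymm : ∀ x y, W x y = W y x)
    (hWint : IntegrableOn (Function.uncurry W) (I01 ×ˢ I01))
    (hcut : Tendsto (fun n => cutNorm (fun x y => Wseq n x y - W x y)) atTop (nhds 0))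
    (f : ℝ → ℝ → ℝ) (hfcont : Continuous (Function.uncurry f))
    (hfbd : ∃ C : ℝ, ∀ a b, |f a b| ≤ C)
    (u : ℕ → ℝ → ℝ) (hu : ∀ n, Measurable (u n))
    (hub : ∃ C : ℝ, ∀ n x, |u n x| ≤ C) :
    (∃ φ : ℕ → ℕ, StrictMono φ ∧ ∃ ν : ℝ → Measure ℝ, IsYoungMeasure ν ∧
      NarrowConv (fun k => deltaYM (u (φ k))) ν) ∧
    (∀ φ : ℕ → ℕ, StrictMono φ → ∀ ν : ℝ → Measure ℝ, IsYoungMeasure ν →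
      NarrowConv (fun k => deltaYM (u (φ k))) ν →
      Tendsto
        (fun k => ∫ x in I01, ∫ y in I01, Wseq (φ k) x y * f (u (φ k) x) (u (φ k) y))
        atTop
        (nhds (∫ x in I01, ∫ y in I01, W x y * ∫ t, (∫ s, f s t ∂(ν x)) ∂(ν y)))) := by

  obtain ⟨CW, hCW⟩ := hWseqBd
  obtain ⟨K, hK⟩ := hfbd
  obtain ⟨C, hC⟩ := hub
  refine ⟨?_, ?_⟩
  · obtain ⟨π, φ, hφ, hπ⟩ := YM.compact u hu C hC
    obtain ⟨ν, hν, rfl⟩ := YM.exists_nu π (YM.limit_fst _ (fun k => hu (φ k)) _ hπ)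
    exact ⟨φ, hφ, ν, hν, YM.narrow_of_tendsto _ (fun k => hu (φ k)) ν hν hπ⟩
  · intro φ hφ ν hν h
    have ht := YM.tendsto_of_narrow _ (fun k => hu (φ k)) C (fun k => hC (φ k)) ν hν h
    have hW := YM.integrable_mm W hWint
    have hWn := fun n => YM.integrable_mm (Wseq n) (hWseqInt n)
    have hA := YM.fixed W hWmeas hW f hfcont K hK _ (fun k => hu (φ k)) ν hν ht
    have hV : ∀ n, Integrable (fun z : ℝ × ℝ => Wseq n z.1 z.2 - W z.1 z.2)
        (YM.mI.prod YM.mI) := fun n => (hWn n).sub hW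
    have hB := YM.cut_tendsto (fun k x y => Wseq (φ k) x y - W x y) (fun k => hV (φ k))
      (CW + ∫ z, ‖W z.1 z.2‖ ∂(YM.mI.prod YM.mI)) (fun k => by
        have h1 := hCW (φ k)
        rw [YM.iterated (fun x y => |Wseq (φ k) x y|) (hWn (φ k)).norm] at h1
        simp only [← Real.norm_eq_abs] at h1
        refine le_trans ?_ (add_le_add_left h1 _)
        rw [← integral_add (hWn (φ k)).norm hW.norm]
        exact integral_mono (hV (φ k)).norm ((hWn (φ k)).norm.add hW.norm)
          fun z => norm_sub_le _ _)
      (hcut.comp hφ.tendsto_atTop) f hfcont K hK (fun k => u (φ k)) (fun k => hu _) C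
      (fun k => hC _)
    have hAB := hB.add hA
    rw [zero_add] at hAB
    refine hAB.congr fun k => ?_
    have hm : AEStronglyMeasurable (fun z : ℝ × ℝ => f (u (φ k) z.1) (u (φ k) z.2))
        (YM.mI.prod YM.mI) :=
      (hfcont.measurable.comp (((hu (φ k)).comp measurable_fst).prodMk
        ((hu (φ k)).comp measurable_snd))).aestronglyMeasurable
    have i1 := hW.mul_bdd (c := K) hm (ae_of_all _ fun z => hK _ _)
    have i2 := (hWn (φ k)).mul_bdd (c := K) hm (ae_of_all _ fun z => hK _ _)
    have i3 := (hV (φ k)).mul_bdd (c := K) hm (ae_of_all _ fun z => hK _ _)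
    rw [YM.iterated (fun x y => W x y * f (u (φ k) x) (u (φ k) y)) i1,
      YM.iterated (fun x y => Wseq (φ k) x y * f (u (φ k) x) (u (φ k) y)) i2,
      ← integral_add i3 i1]
    congr 1
    funext z
    ring
end
end
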